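/- arXiv:2406.18004 — 8 statements merged into one kernel-verified Lean document; each statement's English description precedes it below -/
import Mathlib

section
/- Let β ∈ (-1, 0). Then, as T → ∞, the function T ↦ e^{-T} ∫_0^T e^x x^β dx − T^β + β T^{β−1} is O(T^{β−2}); that is, there exist constants M > 0 and a > 0 such that |e^{-T} ∫_0^T e^x x^β dx − (T^β − β T^{β−1})| ≤ M T^{β−2} for all T > a. -/
open MeasureTheory intervalIntegral

/-!
Multiply through by `e^T`: with `D T = ∫₀ᵀ eˣ x^β dx - e^T (T^β - β T^(β-1))` and
`G T = e^T T^(β-2)`, the claim is `|D T| ≤ M G T` for large `T`. Differentiating,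
`D' T = β (β - 1) e^T T^(β-2)`, which lies between `0` and `2 e^T T^(β-2)`, whereas
`G' T = e^T T^(β-2) (1 - (2 - β) / T) ≥ e^T T^(β-2) / 2` for `T ≥ 6`. Hence `|D'| ≤ 4 G'` on
`[6, ∞)`, and for `M ≥ 4` both `M G - D` and `M G + D` are monotone there. Taking
`M = 4 + |D 6| / G 6` makes them nonnegative at `6`, hence on all of `[6, ∞)`.
-/

namespace ExpRpow

/-- `e^T` times the quantity to be estimated. -/
noncomputable def remainder (β T : ℝ) : ℝ :=
  (∫ x in (0:ℝ)..T, Real.exp x * x ^ β) - Real.exp T * (T ^ β - β * T ^ (β - 1))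

/-- `e^T` times the comparison function `T^(β-2)`. -/
noncomputable def comparison (β T : ℝ) : ℝ := Real.exp T * T ^ (β - 2)

lemma intervalIntegrable_exp_mul_rpow {β : ℝ} (hβ : -1 < β) (T : ℝ) :
    IntervalIntegrable (fun x : ℝ => Real.exp x * x ^ β) volume 0 T :=
  (intervalIntegrable_rpow' hβ).continuousOn_mul Real.continuous_exp.continuousOn

lemma hasDerivAt_remainder {β T : ℝ} (hβ : -1 < β) (hT : 0 < T) :
    HasDerivAt (remainder β) (β * (β - 1) * (Real.exp T * T ^ (β - 2))) T := by
  have hF : HasDerivAt (fun T : ℝ => ∫ x in (0:ℝ)..T, Real.exp x * x ^ β)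
      (Real.exp T * T ^ β) T := by
    refine integral_hasDerivAt_right (intervalIntegrable_exp_mul_rpow hβ T) ?_ ?_
    · exact (by fun_prop : Measurable fun x : ℝ => Real.exp x * x ^ β).stronglyMeasurable
        |>.stronglyMeasurableAtFilter
    · exact Real.continuous_exp.continuousAt.mul
        (Real.continuousAt_rpow_const T β (Or.inl hT.ne'))
  have h1 : HasDerivAt (fun x : ℝ => x ^ β) (β * T ^ (β - 1)) T :=
    Real.hasDerivAt_rpow_const (Or.inl hT.ne')
  have h2 : HasDerivAt (fun x : ℝ => x ^ (β - 1)) ((β - 1) * T ^ (β - 1 - 1)) T :=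
    Real.hasDerivAt_rpow_const (Or.inl hT.ne')
  have h := hF.sub ((Real.hasDerivAt_exp T).mul (h1.sub (h2.const_mul β)))
  rw [show β - 1 - 1 = β - 2 by ring] at h
  refine h.congr_deriv ?_
  simp only [Pi.sub_apply]
  ring

lemma hasDerivAt_comparison (β : ℝ) {T : ℝ} (hT : 0 < T) :
    HasDerivAt (comparison β) (Real.exp T * T ^ (β - 2) * (1 - (2 - β) / T)) T := by
  have h1 : HasDerivAt (fun x : ℝ => x ^ (β - 2)) ((β - 2) * T ^ (β - 2 - 1)) T :=
    Real.hasDerivAt_rpow_const (Or.inl hT.ne')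
  refine ((Real.hasDerivAt_exp T).mul h1).congr_deriv ?_
  rw [Real.rpow_sub_one hT.ne']
  ring

/-- If `|s| ≤ 1` and `M ≥ 4`, the derivative of `M G + s D` is nonnegative on `[6, ∞)`. The cases
`s = 1` and `s = -1` bound `D` from both sides. -/
lemma monotoneOn_comparison_add {β M s : ℝ} (hβ₁ : -1 < β) (hβ₂ : β < 0) (hM : 4 ≤ M)
    (hs : |s| ≤ 1) :
    MonotoneOn (fun T => M * comparison β T + s * remainder β T) (Set.Ici 6) := by
  have hd : ∀ T : ℝ, 6 ≤ T → HasDerivAt (fun T => M * comparison β T + s * remainder β T)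
      (M * (Real.exp T * T ^ (β - 2) * (1 - (2 - β) / T))
        + s * (β * (β - 1) * (Real.exp T * T ^ (β - 2)))) T := fun T hT =>
    ((hasDerivAt_comparison β (by linarith)).const_mul M).add
      ((hasDerivAt_remainder hβ₁ (by linarith)).const_mul s)
  refine monotoneOn_of_hasDerivWithinAt_nonneg (convex_Ici 6)
    (fun T hT => (hd T hT).continuousAt.continuousWithinAt)
    (fun T hT => (hd T (interior_subset hT)).hasDerivWithinAt) ?_
  intro T hT
  have hT6 : (6:ℝ) ≤ T := interior_subset hT
  have hpos : 0 < Real.exp T * T ^ (β - 2) :=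
    mul_pos (Real.exp_pos T) (Real.rpow_pos_of_pos (by linarith) _)
  have hhalf : (2 - β) / T ≤ 1 / 2 := by
    rw [div_le_div_iff₀ (by linarith) (by norm_num)]
    linarith
  have hc0 : 0 ≤ β * (β - 1) := by nlinarith
  have hc2 : β * (β - 1) ≤ 2 := by nlinarith
  have hs1 := (abs_le.mp hs).1
  have hMG : 2 ≤ M * (1 - (2 - β) / T) := by nlinarith
  have hsD : -2 ≤ s * (β * (β - 1)) := by nlinarith
  calc (0:ℝ) ≤ (Real.exp T * T ^ (β - 2)) *
        (M * (1 - (2 - β) / T) + s * (β * (β - 1))) :=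
      mul_nonneg hpos.le (by linarith)
    _ = _ := by ring

end ExpRpow

open ExpRpow in
theorem stmt_1 (β : ℝ) (hβ₁ : -1 < β) (hβ₂ : β < 0) :
    ∃ M : ℝ, 0 < M ∧ ∃ a : ℝ, 0 < a ∧ ∀ T : ℝ, a < T →
      |Real.exp (-T) * (∫ x in (0:ℝ)..T, Real.exp x * x ^ β)
        - (T ^ β - β * T ^ (β - 1))| ≤ M * T ^ (β - 2) := by
  have hG6 : 0 < comparison β 6 :=
    mul_pos (Real.exp_pos 6) (Real.rpow_pos_of_pos (by norm_num) _)
  have hq : 0 ≤ |remainder β 6| / comparison β 6 := by positivity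
  obtain ⟨M, hMdef⟩ : ∃ M, M = 4 + |remainder β 6| / comparison β 6 := ⟨_, rfl⟩
  have hM : 4 ≤ M := by linarith
  have hM6 : |remainder β 6| ≤ M * comparison β 6 := by
    rw [hMdef, add_mul, div_mul_cancel₀ _ hG6.ne']
    linarith
  refine ⟨M, by linarith, 6, by norm_num, fun T hT => ?_⟩
  have hmem : (6:ℝ) ∈ Set.Ici (6:ℝ) := Set.self_mem_Ici
  have hplus := monotoneOn_comparison_add (s := 1) hβ₁ hβ₂ hM (by simp) hmem hT.le hT.le
  have hminus := monotoneOn_comparison_add (s := -1) hβ₁ hβ₂ hM (by simp) hmem hT.le hT.le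
  simp only at hplus hminus
  have h6 := abs_le.mp hM6
  have hD : |remainder β T| ≤ M * comparison β T :=
    abs_le.mpr ⟨by linarith [h6.1], by linarith [h6.2]⟩
  have he : Real.exp (-T) * Real.exp T = 1 := by rw [← Real.exp_add]; simp
  calc |Real.exp (-T) * (∫ x in (0:ℝ)..T, Real.exp x * x ^ β) - (T ^ β - β * T ^ (β - 1))|
      = |Real.exp (-T) * remainder β T| := by
        congr 1
        unfold remainder
        linear_combination (T ^ β - β * T ^ (β - 1)) * he
    _ = Real.exp (-T) * |remainder β T| := by rw [abs_mul, abs_of_pos (Real.exp_pos _)]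
    _ ≤ Real.exp (-T) * (M * comparison β T) := by gcongr
    _ = M * T ^ (β - 2) := by
        unfold comparison
        linear_combination M * T ^ (β - 2) * he
end

section
/- Let α₁ > -1 and α₂ ∈ ℝ with δ := 1 + α₁ + α₂ ∈ (-1, 0). Then, as T → ∞, ∬_{0 ≤ x ≤ z ≤ T} e^{x−z} x^{α₁} z^{α₂} dx dz = Γ(δ+1) B(1+α₁, −δ) + δ^{-1} T^δ + O(T^{δ−1}); that is, the difference between the double integral and Γ(δ+1) B(1+α₁, −δ) + δ^{-1} T^δ is O(T^{δ−1}) as T → ∞. -/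
/-!
Substituting `x = z u` in the inner integral turns it, for `z > 0`, into
`F z = ∫_{0 < u < 1} z ^ δ * e^{-(1 - u) z} * u ^ α₁ du` (`innerInt`).

* By Tonelli, `F` is integrable on `(0, ∞)`: integrating first in `z` gives
  `Γ(δ+1) (1-u)^{-δ-1} u^{α₁}`, and then the Beta integral gives `∫₀^∞ F = Γ(δ+1) B(1+α₁, -δ)`
  (`innerInt_integrable_and_integral`).
* The weight `e^{-(1-u)z}` concentrates at `u = 1`, where `u ^ α₁ = 1 + O(1 - u)`; this gives
  `|F z - z ^ (δ-1)| ≤ C z ^ (δ-2)` for all `z > 0` (`innerInt_asymp`).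

Hence `∫₀^T F = ∫₀^∞ F - ∫_T^∞ F`, and the tail equals
`∫_T^∞ z ^ (δ-1) dz = -δ⁻¹ T ^ δ` up to `C ∫_T^∞ z ^ (δ-2) dz = C T ^ (δ-1) / (1-δ)`.
-/

open MeasureTheory intervalIntegral

/-- The Euler Beta function `B(a,b) = Γ(a)Γ(b)/Γ(a+b)`. -/
noncomputable def Beta (a b : ℝ) : ℝ := Real.Gamma a * Real.Gamma b / Real.Gamma (a + b)

open Set

/-- The inner integral after the substitution `x = z u`; here `a` plays the role of `α₁` and
`d` that of `δ`. -/
noncomputable def innerInt (a d z : ℝ) : ℝ :=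
  ∫ u in Ioo (0 : ℝ) 1, z ^ d * Real.exp (-((1 - u) * z)) * u ^ a

/-- Real form of Mathlib's complex Beta integral. -/
lemma real_beta_integral (a b : ℝ) (ha : 0 < a) (hb : 0 < b) :
    IntegrableOn (fun u : ℝ => u ^ (a - 1) * (1 - u) ^ (b - 1)) (Ioo 0 1) ∧
      ∫ u in Ioo (0 : ℝ) 1, u ^ (a - 1) * (1 - u) ^ (b - 1) = Beta a b := by
  have hc := Complex.betaIntegral_convergent (u := a) (v := b) (by simpa) (by simpa)
  rw [intervalIntegrable_iff_integrableOn_Ioo_of_le zero_le_one] at hc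
  have hre : ∀ u ∈ Ioo (0 : ℝ) 1,
      RCLike.re ((u : ℂ) ^ ((a : ℂ) - 1) * (1 - (u : ℂ)) ^ ((b : ℂ) - 1))
        = u ^ (a - 1) * (1 - u) ^ (b - 1) := by
    intro u hu
    have h1 : (u : ℂ) ^ ((a : ℂ) - 1) = ((u ^ (a - 1) : ℝ) : ℂ) := by
      rw [Complex.ofReal_cpow hu.1.le]; push_cast; rfl
    have h2 : (1 - (u : ℂ)) ^ ((b : ℂ) - 1) = (((1 - u) ^ (b - 1) : ℝ) : ℂ) := by
      rw [Complex.ofReal_cpow (by linarith [hu.2])]; push_cast; rfl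
    rw [h1, h2, ← Complex.ofReal_mul]
    exact Complex.ofReal_re _
  refine ⟨IntegrableOn.congr_fun hc.re hre measurableSet_Ioo, ?_⟩
  have hB : Beta a b = (Complex.betaIntegral a b).re :=
    ProbabilityTheory.beta_eq_betaIntegralReal a b ha hb
  rw [hB, Complex.betaIntegral, intervalIntegral.integral_of_le zero_le_one,
    integral_Ioc_eq_integral_Ioo, ← setIntegral_congr_fun measurableSet_Ioo hre]
  exact integral_re hc

lemma integrableOn_rpow_mul_exp (d r : ℝ) (hd : -1 < d) (hr : 0 < r) :
    IntegrableOn (fun z : ℝ => z ^ d * Real.exp (-(r * z))) (Ioi 0) := by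
  simpa using integrableOn_rpow_mul_exp_neg_mul_rpow hd zero_lt_one hr

lemma innerInt_integrable_and_integral (a d : ℝ) (ha : -1 < a) (hd₁ : -1 < d) (hd₂ : d < 0) :
    IntegrableOn (innerInt a d) (Ioi 0) ∧
      ∫ z in Ioi (0 : ℝ), innerInt a d z = Real.Gamma (d + 1) * Beta (1 + a) (-d) := by
  obtain ⟨hBi, hBv⟩ := real_beta_integral (1 + a) (-d) (by linarith) (by linarith)
  rw [add_sub_cancel_left] at hBi hBv
  let k : ℝ × ℝ → ℝ := fun p => p.1 ^ d * Real.exp (-((1 - p.2) * p.1)) * p.2 ^ a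
  have hkm : Measurable k := by fun_prop
  have hz : ∀ u ∈ Ioo (0 : ℝ) 1, ∫ z in Ioi (0 : ℝ), k (z, u)
      = Real.Gamma (d + 1) * (u ^ a * (1 - u) ^ (-d - 1)) := by
    intro u hu
    have hu1 : 0 < 1 - u := by linarith [hu.2]
    have h := Real.integral_rpow_mul_exp_neg_mul_Ioi (a := d + 1) (r := 1 - u) (by linarith) hu1
    rw [add_sub_cancel_right] at h
    simp only [k]
    rw [MeasureTheory.integral_mul_const, h, one_div, Real.inv_rpow hu1.le, ← Real.rpow_neg hu1.le]
    ring_nf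
  have hzn : ∀ u ∈ Ioo (0 : ℝ) 1, ∫ z in Ioi (0 : ℝ), ‖k (z, u)‖
      = Real.Gamma (d + 1) * (u ^ a * (1 - u) ^ (-d - 1)) := by
    intro u hu
    rw [← hz u hu]
    refine setIntegral_congr_fun measurableSet_Ioi fun z hzz => ?_
    have h1 : 0 ≤ z ^ d := Real.rpow_nonneg (le_of_lt hzz) _
    have h2 : 0 ≤ u ^ a := Real.rpow_nonneg hu.1.le _
    exact Real.norm_of_nonneg (by positivity)
  have hk : Integrable k
      ((volume.restrict (Ioi (0 : ℝ))).prod (volume.restrict (Ioo (0 : ℝ) 1))) := by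
    rw [integrable_prod_iff' hkm.aestronglyMeasurable]
    constructor
    · refine (ae_restrict_iff' measurableSet_Ioo).2 (Filter.Eventually.of_forall fun u hu => ?_)
      exact (integrableOn_rpow_mul_exp d (1 - u) hd₁ (by linarith [hu.2])).mul_const (u ^ a)
    · exact IntegrableOn.congr_fun (hBi.const_mul (Real.Gamma (d + 1)))
        (fun u hu => (hzn u hu).symm) measurableSet_Ioo
  refine ⟨hk.integral_prod_left, ?_⟩
  have hswap := integral_integral_swap (f := fun z u => k (z, u)) hk
  calc ∫ z in Ioi (0 : ℝ), innerInt a d z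
      = ∫ u in Ioo (0 : ℝ) 1, ∫ z in Ioi (0 : ℝ), k (z, u) := hswap
    _ = ∫ u in Ioo (0 : ℝ) 1, Real.Gamma (d + 1) * (u ^ a * (1 - u) ^ (-d - 1)) :=
        setIntegral_congr_fun measurableSet_Ioo hz
    _ = _ := by rw [MeasureTheory.integral_const_mul, hBv]

lemma inner_eq_innerInt (a b d z : ℝ) (hd : d = 1 + a + b) (hz : 0 < z) :
    ∫ x in (0 : ℝ)..z, Real.exp (x - z) * x ^ a * z ^ b = innerInt a d z := by
  have h := intervalIntegral.mul_integral_comp_mul_left (a := 0) (b := 1) (c := z)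
    (f := fun x => Real.exp (x - z) * x ^ a * z ^ b)
  rw [mul_zero, mul_one] at h
  rw [← h, ← intervalIntegral.integral_const_mul, innerInt,
    intervalIntegral.integral_of_le zero_le_one, integral_Ioc_eq_integral_Ioo]
  refine setIntegral_congr_fun measurableSet_Ioo fun u hu => ?_
  have h1 : z ^ d = z * z ^ a * z ^ b := by
    rw [hd, Real.rpow_add hz, Real.rpow_add hz, Real.rpow_one]
  have h2 : z * u - z = -((1 - u) * z) := by ring
  simp only [h1, h2, Real.mul_rpow hz.le hu.1.le]
  ring

lemma rpow_sub_one_le (a : ℝ) :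
    ∃ K : ℝ, 0 ≤ K ∧ ∀ u ∈ Icc (1 / 2 : ℝ) 1, |u ^ a - 1| ≤ K * (1 - u) := by
  have hcont : ContinuousOn (fun u : ℝ => a * u ^ (a - 1)) (Icc (1 / 2 : ℝ) 1) := by
    refine continuousOn_const.mul (continuousOn_id.rpow_const fun u hu => Or.inl ?_)
    have : (0 : ℝ) < u := by linarith [hu.1]
    exact this.ne'
  obtain ⟨K, hK⟩ := isCompact_Icc.exists_bound_of_continuousOn hcont
  refine ⟨K, (norm_nonneg _).trans (hK 1 (by norm_num)), fun u hu => ?_⟩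
  have h := Convex.norm_image_sub_le_of_norm_hasDerivWithin_le (f := fun u : ℝ => u ^ a)
    (f' := fun u => a * u ^ (a - 1)) (s := Icc (1 / 2 : ℝ) 1) (x := 1) (y := u)
    (fun v hv => (Real.hasDerivAt_rpow_const
      (Or.inl (by linarith [hv.1] : (0 : ℝ) < v).ne')).hasDerivWithinAt)
    hK (convex_Icc _ _) (by norm_num) hu
  simp only [Real.one_rpow, Real.norm_eq_abs] at h
  rwa [abs_sub_comm u 1, abs_of_nonneg (by linarith [hu.2] : 0 ≤ 1 - u)] at h

/-- Near `u = 1` the difference `u ^ a - 1` is `O(1 - u)`; for `u ≤ 1/2` the exponential alone is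
at most `8 / z ^ 2`. -/
lemma exp_mul_rpow_sub_one_le (a : ℝ) :
    ∃ K : ℝ, 0 ≤ K ∧ ∀ z > 0, ∀ u ∈ Ioo (0 : ℝ) 1,
      |Real.exp (-((1 - u) * z)) * u ^ a - Real.exp (-((1 - u) * z))|
        ≤ K * ((1 - u) * Real.exp (-((1 - u) * z))) + 8 / z ^ 2 * (u ^ a + 1) := by
  obtain ⟨K, hK0, hK⟩ := rpow_sub_one_le a
  refine ⟨K, hK0, fun z hz u hu => ?_⟩
  have hua : 0 ≤ u ^ a := Real.rpow_nonneg hu.1.le _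
  have hu1 : 0 < 1 - u := by linarith [hu.2]
  have hE := Real.exp_pos (-((1 - u) * z))
  have heq : Real.exp (-((1 - u) * z)) * u ^ a - Real.exp (-((1 - u) * z))
      = Real.exp (-((1 - u) * z)) * (u ^ a - 1) := by ring
  rw [heq, abs_mul, abs_of_pos hE]
  rcases le_total (1 / 2) u with h | h
  · have := mul_le_mul_of_nonneg_left (hK u ⟨h, hu.2.le⟩) hE.le
    have : 0 ≤ 8 / z ^ 2 * (u ^ a + 1) := by positivity
    linarith
  · have h1 : |u ^ a - 1| ≤ u ^ a + 1 := abs_le.2 ⟨by linarith, by linarith⟩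
    have h2 : Real.exp (-((1 - u) * z)) ≤ 8 / z ^ 2 := by
      have hq := Real.quadratic_le_exp_of_nonneg (x := (1 - u) * z) (by positivity)
      have hlow : z / 2 ≤ (1 - u) * z := by nlinarith
      rw [Real.exp_neg, inv_eq_one_div, div_le_div_iff₀ (Real.exp_pos _) (by positivity)]
      nlinarith
    have := mul_le_mul h2 h1 (abs_nonneg _) (by positivity)
    have : 0 ≤ K * ((1 - u) * Real.exp (-((1 - u) * z))) := by positivity
    linarith

lemma integral_exp_one_sub (z : ℝ) (hz : 0 < z) :
    ∫ u in Ioo (0 : ℝ) 1, Real.exp (-((1 - u) * z)) = (1 - Real.exp (-z)) / z := by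
  rw [← integral_Ioc_eq_integral_Ioo, ← intervalIntegral.integral_of_le zero_le_one,
    intervalIntegral.integral_eq_sub_of_hasDerivAt
      (f := fun u => Real.exp (-((1 - u) * z)) / z) (fun u _ => ?_)
      (Continuous.intervalIntegrable (by fun_prop) _ _)]
  · simp; ring
  · have h := ((((hasDerivAt_id u).const_sub 1).mul_const z).neg.exp).div_const z
    convert! h using 1
    simp; field_simp

lemma integral_one_sub_mul_exp_le (z : ℝ) (hz : 0 < z) :
    ∫ u in Ioo (0 : ℝ) 1, (1 - u) * Real.exp (-((1 - u) * z)) ≤ 1 / z ^ 2 := by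
  rw [← integral_Ioc_eq_integral_Ioo, ← intervalIntegral.integral_of_le zero_le_one,
    intervalIntegral.integral_eq_sub_of_hasDerivAt
      (f := fun u => ((1 - u) / z + 1 / z ^ 2) * Real.exp (-((1 - u) * z))) (fun u _ => ?_)
      (Continuous.intervalIntegrable (by fun_prop) _ _)]
  · have : 0 ≤ ((1 - 0) / z + 1 / z ^ 2) * Real.exp (-((1 - 0) * z)) := by positivity
    simp at this ⊢
    linarith
  · have h := ((((hasDerivAt_id u).const_sub 1).div_const z).add_const (1 / z ^ 2)).mul
      ((((hasDerivAt_id u).const_sub 1).mul_const z).neg.exp)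
    convert! h using 1
    simp; field_simp; ring

lemma innerInt_asymp (a d : ℝ) (ha : -1 < a) :
    ∃ C : ℝ, 0 ≤ C ∧ ∀ z > 0, |innerInt a d z - z ^ (d - 1)| ≤ C * z ^ (d - 2) := by
  obtain ⟨K, hK0, hK⟩ := exp_mul_rpow_sub_one_le a
  have hI : IntegrableOn (fun u : ℝ => u ^ a + 1) (Ioo 0 1) := by
    have h := intervalIntegral.intervalIntegrable_rpow' (a := 0) (b := 1) ha
    rw [intervalIntegrable_iff_integrableOn_Ioo_of_le zero_le_one] at h
    exact h.add (integrableOn_const (by simp))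
  set S : ℝ := ∫ u in Ioo (0 : ℝ) 1, (u ^ a + 1) with hS
  have hS0 : 0 ≤ S := setIntegral_nonneg measurableSet_Ioo fun u hu =>
    add_nonneg (Real.rpow_nonneg hu.1.le _) zero_le_one
  refine ⟨K + 8 * S + 1, by positivity, fun z hz => ?_⟩
  have hIe : IntegrableOn (fun u : ℝ => Real.exp (-((1 - u) * z))) (Ioo 0 1) :=
    (Continuous.integrableOn_Icc (by fun_prop)).mono_set Ioo_subset_Icc_self
  have hIe' : IntegrableOn (fun u : ℝ => (1 - u) * Real.exp (-((1 - u) * z))) (Ioo 0 1) :=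
    (Continuous.integrableOn_Icc (by fun_prop)).mono_set Ioo_subset_Icc_self
  have hIea : IntegrableOn (fun u : ℝ => Real.exp (-((1 - u) * z)) * u ^ a) (Ioo 0 1) := by
    refine Integrable.mono' hI (by fun_prop) ?_
    refine (ae_restrict_iff' measurableSet_Ioo).2 (Filter.Eventually.of_forall fun u hu => ?_)
    have hua : 0 ≤ u ^ a := Real.rpow_nonneg hu.1.le _
    have hE : Real.exp (-((1 - u) * z)) ≤ 1 :=
      Real.exp_le_one_iff.2 (by nlinarith [hu.2])
    rw [Real.norm_of_nonneg (by positivity)]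
    nlinarith
  set J : ℝ := ∫ u in Ioo (0 : ℝ) 1, Real.exp (-((1 - u) * z)) * u ^ a with hJ
  have h1 : |J - (1 - Real.exp (-z)) / z| ≤ (K + 8 * S) / z ^ 2 := by
    rw [← integral_exp_one_sub z hz, hJ, ← integral_sub hIea hIe]
    rw [← Real.norm_eq_abs]
    calc _ ≤ ∫ u in Ioo (0 : ℝ) 1, (K * ((1 - u) * Real.exp (-((1 - u) * z)))
              + 8 / z ^ 2 * (u ^ a + 1)) :=
          norm_integral_le_of_norm_le ((hIe'.const_mul K).add (hI.const_mul _))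
            ((ae_restrict_iff' measurableSet_Ioo).2
              (Filter.Eventually.of_forall fun u hu => hK z hz u hu))
      _ = K * (∫ u in Ioo (0 : ℝ) 1, (1 - u) * Real.exp (-((1 - u) * z))) + 8 / z ^ 2 * S := by
          rw [integral_add (hIe'.const_mul K) (hI.const_mul _), MeasureTheory.integral_const_mul,
            MeasureTheory.integral_const_mul]
      _ ≤ K * (1 / z ^ 2) + 8 / z ^ 2 * S := by
          gcongr
          exact integral_one_sub_mul_exp_le z hz
      _ = (K + 8 * S) / z ^ 2 := by ring
  have h2 : |(1 - Real.exp (-z)) / z - 1 / z| ≤ 1 / z ^ 2 := by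
    have he : (1 - Real.exp (-z)) / z - 1 / z = -(Real.exp (-z) / z) := by ring
    rw [he, abs_neg, abs_of_pos (by positivity), div_le_div_iff₀ hz (by positivity), Real.exp_neg]
    have h3 : z ≤ Real.exp z := by linarith [Real.add_one_le_exp z]
    have h4 : (Real.exp z)⁻¹ * z ≤ 1 := by
      rw [inv_mul_le_iff₀ (Real.exp_pos z)]; linarith
    nlinarith
  have h3 : |J - 1 / z| ≤ (K + 8 * S + 1) / z ^ 2 := by
    refine (abs_sub_le _ _ _).trans ((add_le_add h1 h2).trans (le_of_eq ?_))
    ring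
  have hF : innerInt a d z - z ^ (d - 1) = z ^ d * (J - 1 / z) := by
    rw [innerInt, Real.rpow_sub_one hz.ne', hJ, mul_sub, ← MeasureTheory.integral_const_mul]
    simp only [mul_assoc]
    ring
  have hd2 : z ^ (d - 2) = z ^ d / z ^ 2 := by
    rw [Real.rpow_sub hz, Real.rpow_two]
  have hzd : 0 ≤ z ^ d := Real.rpow_nonneg hz.le _
  rw [hF, abs_mul, abs_of_nonneg hzd, hd2]
  refine (mul_le_mul_of_nonneg_left h3 hzd).trans (le_of_eq ?_)
  ring

theorem stmt_2 (α₁ α₂ δ : ℝ) (h₁ : -1 < α₁) (hδ : δ = 1 + α₁ + α₂)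
    (hδ₁ : -1 < δ) (hδ₂ : δ < 0) :
    ∃ M : ℝ, 0 < M ∧ ∃ a : ℝ, 0 < a ∧ ∀ T : ℝ, a < T →
      |(∫ z in (0:ℝ)..T, ∫ x in (0:ℝ)..z, Real.exp (x - z) * x ^ α₁ * z ^ α₂)
        - (Real.Gamma (δ + 1) * Beta (1 + α₁) (-δ) + δ⁻¹ * T ^ δ)|
      ≤ M * T ^ (δ - 1) := by
  obtain ⟨C, hC0, hC⟩ := innerInt_asymp α₁ δ h₁
  obtain ⟨hFi, hFv⟩ := innerInt_integrable_and_integral α₁ δ h₁ hδ₁ hδ₂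
  have hδ3 : 0 < 1 - δ := by linarith
  refine ⟨C / (1 - δ) + 1, by positivity, 1, one_pos, fun T hT => ?_⟩
  have hT0 : 0 < T := by linarith
  have hFT : IntegrableOn (innerInt α₁ δ) (Ioi T) := hFi.mono_set (Ioi_subset_Ioi hT0.le)
  have hmain : ∫ z in (0:ℝ)..T, ∫ x in (0:ℝ)..z, Real.exp (x - z) * x ^ α₁ * z ^ α₂
      = Real.Gamma (δ + 1) * Beta (1 + α₁) (-δ) - ∫ z in Ioi T, innerInt α₁ δ z := by
    rw [← hFv, intervalIntegral.integral_of_le hT0.le,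
      setIntegral_congr_fun measurableSet_Ioc
        (fun z hz => inner_eq_innerInt α₁ α₂ δ z hδ hz.1),
      ← Ioc_union_Ioi_eq_Ioi hT0.le,
      setIntegral_union Ioc_disjoint_Ioi_same measurableSet_Ioi
        (hFi.mono_set Ioc_subset_Ioi_self) hFT]
    ring
  have hpow : ∫ z in Ioi T, z ^ (δ - 1) = -(δ⁻¹ * T ^ δ) := by
    rw [integral_Ioi_rpow_of_lt (by linarith) hT0, sub_add_cancel]
    ring
  have hpow2 : ∫ z in Ioi T, z ^ (δ - 2) = T ^ (δ - 1) / (1 - δ) := by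
    rw [integral_Ioi_rpow_of_lt (by linarith) hT0, show δ - 2 + 1 = -(1 - δ) by ring,
      neg_div_neg_eq, neg_sub]
  have hpi : IntegrableOn (fun z : ℝ => z ^ (δ - 1)) (Ioi T) :=
    integrableOn_Ioi_rpow_of_lt (by linarith) hT0
  have hpi2 : IntegrableOn (fun z : ℝ => z ^ (δ - 2)) (Ioi T) :=
    integrableOn_Ioi_rpow_of_lt (by linarith) hT0
  have htail : |∫ z in Ioi T, (innerInt α₁ δ z - z ^ (δ - 1))| ≤ C * (T ^ (δ - 1) / (1 - δ)) := by
    rw [← Real.norm_eq_abs, ← hpow2, ← MeasureTheory.integral_const_mul]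
    exact norm_integral_le_of_norm_le (hpi2.const_mul C)
      ((ae_restrict_iff' measurableSet_Ioi).2
        (Filter.Eventually.of_forall fun z hz => hC z (hT0.trans hz)))
  have hTd : 0 ≤ T ^ (δ - 1) := Real.rpow_nonneg hT0.le _
  rw [integral_sub hFT hpi, hpow] at htail
  rw [hmain, abs_sub_comm]
  calc _ = |(∫ z in Ioi T, innerInt α₁ δ z) - -(δ⁻¹ * T ^ δ)| := by ring_nf
    _ ≤ C * (T ^ (δ - 1) / (1 - δ)) := htail
    _ = C / (1 - δ) * T ^ (δ - 1) := by ring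
    _ ≤ _ := by nlinarith
end

section
/- Let α₁ > -1 and α₂ = -1 − α₁. Then (∬_{0 ≤ x ≤ z ≤ T} e^{x−z} x^{α₁} z^{α₂} dx dz) / log T → 1 as T → ∞. -/
open MeasureTheory intervalIntegral Filter

/-!
The substitution `x = z * u` turns the inner integral, for `z > 0`, into the Laplace-type integral
`K α₁ z = ∫ u in 0..1, exp (-(z * (1 - u))) * u ^ α₁`; the powers of `z` cancel because
`α₁ + α₂ = -1`.

The concentration of the kernel at `u = 1` gives `z * K α z → 1`. Integration by parts yields
`z * K (α + 1) z = 1 - (α + 1) * K α z`, and `K α z → 0` by dominated convergence, while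
`z * (K α z - K (α + 1) z) = ∫ (z * (1 - u)) * exp (-(z * (1 - u))) * u ^ α → 0`, again by dominated
convergence since `y * exp (-y) ≤ 1` for `y ≥ 0`.

As `K α` is continuous, `z * K α z → 1` means that its integral over `[0, T]` is asymptotic to
that of `1 / z` over `[1, T]`, which is `log T`.
-/

/-- The inner integral of the theorem after rescaling `x = z * u`. -/
noncomputable def laplaceK (α z : ℝ) : ℝ :=
  ∫ u in (0:ℝ)..1, Real.exp (-(z * (1 - u))) * u ^ α

lemma laplaceK_integrable {α : ℝ} (h : -1 < α) (z : ℝ) :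
    IntervalIntegrable (fun u : ℝ => Real.exp (-(z * (1 - u))) * u ^ α) volume 0 1 :=
  (intervalIntegrable_rpow' h).continuousOn_mul (by fun_prop)

lemma laplaceK_continuous {α : ℝ} (h : -1 < α) : Continuous (laplaceK α) := by
  rw [continuous_iff_continuousAt]
  intro z₀
  refine continuousAt_of_dominated_interval
    (bound := fun u => Real.exp (|z₀| + 1) * u ^ α) ?_ ?_ ?_ ?_
  · exact Eventually.of_forall fun z => by
      have := (laplaceK_integrable h z).aestronglyMeasurable
      rwa [← Set.uIoc_of_le zero_le_one] at this
  · have hz : ∀ᶠ z in nhds z₀, |z| < |z₀| + 1 :=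
      (continuous_abs.tendsto z₀).eventually (gt_mem_nhds (by linarith))
    filter_upwards [hz] with z hz
    refine Eventually.of_forall fun u hu => ?_
    rw [Set.uIoc_of_le zero_le_one] at hu
    have hp := Real.rpow_nonneg hu.1.le α
    rw [Real.norm_of_nonneg (by positivity)]
    gcongr
    have h1 : -z ≤ |z| := neg_le_abs z
    nlinarith [hu.1, hu.2, abs_nonneg z]
  · exact (intervalIntegrable_rpow' h).const_mul _
  · exact Eventually.of_forall fun u _ => by fun_prop

/-- The negated exponent of the kernel blows up away from `u = 1`, so the kernel decays there. -/
lemma tendsto_mul_one_sub {u : ℝ} (hu : u < 1) :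
    Tendsto (fun z : ℝ => z * (1 - u)) atTop atTop :=
  tendsto_id.atTop_mul_const (by linarith)

lemma laplaceK_tendsto_zero {α : ℝ} (h : -1 < α) : Tendsto (laplaceK α) atTop (nhds 0) := by
  have key : Tendsto (laplaceK α) atTop (nhds (∫ _ in (0:ℝ)..1, (0:ℝ))) := by
    refine intervalIntegral.tendsto_integral_filter_of_dominated_convergence
      (fun u => u ^ α) ?_ ?_ (intervalIntegrable_rpow' h) ?_
    · exact Eventually.of_forall fun z => by
        have := (laplaceK_integrable h z).aestronglyMeasurable
        rwa [← Set.uIoc_of_le zero_le_one] at this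
    · filter_upwards [eventually_ge_atTop 0] with z hz
      refine Eventually.of_forall fun u hu => ?_
      rw [Set.uIoc_of_le zero_le_one] at hu
      have hp := Real.rpow_nonneg hu.1.le α
      rw [Real.norm_of_nonneg (by positivity)]
      refine mul_le_of_le_one_left hp (Real.exp_le_one_iff.2 ?_)
      nlinarith [hu.2]
    · filter_upwards [Measure.ae_ne volume (1:ℝ)] with u hne hu
      rw [Set.uIoc_of_le zero_le_one] at hu
      have := (Real.tendsto_exp_neg_atTop_nhds_zero.comp
        (tendsto_mul_one_sub (lt_of_le_of_ne hu.2 hne))).mul_const (u ^ α)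
      simpa using this
  simpa using key

/-- Integration by parts against `u ^ (α + 1)`, which vanishes at `0`. -/
lemma laplaceK_succ {α : ℝ} (h : -1 < α) (z : ℝ) :
    z * laplaceK (α + 1) z = 1 - (α + 1) * laplaceK α z := by
  have hparts := integral_mul_deriv_eq_deriv_mul_of_hasDerivAt
    (a := 0) (b := 1) (u := fun u : ℝ => Real.exp (-(z * (1 - u))))
    (u' := fun u : ℝ => Real.exp (-(z * (1 - u))) * z)
    (v := fun u : ℝ => u ^ (α + 1)) (v' := fun u : ℝ => (α + 1) * u ^ α)
    (by fun_prop)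
    (fun u _ => (Real.continuousAt_rpow_const u (α + 1)
      (Or.inr (by linarith))).continuousWithinAt)
    (fun u _ => by
      have h1 : HasDerivAt (fun u : ℝ => -(z * (1 - u))) z u := by
        simpa using (((hasDerivAt_id u).const_sub 1).const_mul z).fun_neg
      exact h1.exp)
    (fun u hu => by
      have hu0 : 0 < u := by simpa using hu.1
      simpa using Real.hasDerivAt_rpow_const (p := α + 1) (Or.inl hu0.ne'))
    (Continuous.intervalIntegrable (by fun_prop) _ _)
    ((intervalIntegrable_rpow' h).const_mul _)
  have e1 : (∫ u in (0:ℝ)..1, Real.exp (-(z * (1 - u))) * ((α + 1) * u ^ α))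
      = (α + 1) * laplaceK α z := by
    rw [laplaceK, ← intervalIntegral.integral_const_mul]
    congr 1; ext u; ring
  have e2 : (∫ u in (0:ℝ)..1, Real.exp (-(z * (1 - u))) * z * u ^ (α + 1))
      = z * laplaceK (α + 1) z := by
    rw [laplaceK, ← intervalIntegral.integral_const_mul]
    congr 1; ext u; ring
  rw [e1, e2] at hparts
  have h0 : (0:ℝ) ^ (α + 1) = 0 := Real.zero_rpow (by linarith)
  simp only [h0, sub_self, mul_zero, neg_zero, Real.exp_zero, Real.one_rpow, mul_one, sub_zero]
    at hparts
  linarith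

lemma mul_laplaceK_sub {α : ℝ} (h : -1 < α) (z : ℝ) :
    z * laplaceK α z - z * laplaceK (α + 1) z =
      ∫ u in (0:ℝ)..1, (z * (1 - u)) * Real.exp (-(z * (1 - u))) * u ^ α := by
  rw [laplaceK, laplaceK, ← intervalIntegral.integral_const_mul,
    ← intervalIntegral.integral_const_mul, ← intervalIntegral.integral_sub
      ((laplaceK_integrable h z).const_mul z)
      ((laplaceK_integrable (by linarith) z).const_mul z)]
  refine intervalIntegral.integral_congr_ae (Eventually.of_forall fun u hu => ?_)
  rw [Set.uIoc_of_le zero_le_one] at hu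
  simp only [Real.rpow_add_one hu.1.ne']
  ring

lemma mul_laplaceK_tendsto_one {α : ℝ} (h : -1 < α) :
    Tendsto (fun z => z * laplaceK α z) atTop (nhds 1) := by
  have key : Tendsto (fun z : ℝ => ∫ u in (0:ℝ)..1,
      (z * (1 - u)) * Real.exp (-(z * (1 - u))) * u ^ α) atTop
      (nhds (∫ _ in (0:ℝ)..1, (0:ℝ))) := by
    refine intervalIntegral.tendsto_integral_filter_of_dominated_convergence
      (fun u => u ^ α) ?_ ?_ (intervalIntegrable_rpow' h) ?_
    · exact Eventually.of_forall fun z => by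
        have := ((intervalIntegrable_rpow' (a := 0) (b := 1) h).continuousOn_mul
          (g := fun u : ℝ => (z * (1 - u)) * Real.exp (-(z * (1 - u))))
          (by fun_prop)).aestronglyMeasurable
        rwa [← Set.uIoc_of_le zero_le_one] at this
    · filter_upwards [eventually_ge_atTop 0] with z hz
      refine Eventually.of_forall fun u hu => ?_
      rw [Set.uIoc_of_le zero_le_one] at hu
      have hp := Real.rpow_nonneg hu.1.le α
      have hy : 0 ≤ z * (1 - u) := mul_nonneg hz (by linarith [hu.2])
      rw [Real.norm_of_nonneg (by positivity)]
      refine mul_le_of_le_one_left hp ?_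
      rw [Real.exp_neg, ← div_eq_mul_inv, div_le_one (Real.exp_pos _)]
      linarith [Real.add_one_le_exp (z * (1 - u))]
    · filter_upwards [Measure.ae_ne volume (1:ℝ)] with u hne hu
      rw [Set.uIoc_of_le zero_le_one] at hu
      have := ((Real.tendsto_pow_mul_exp_neg_atTop_nhds_zero 1).comp
        (tendsto_mul_one_sub (lt_of_le_of_ne hu.2 hne))).mul_const (u ^ α)
      simpa using this
  have h2 := key.add ((laplaceK_tendsto_zero h).const_mul (α + 1) |>.const_sub 1)
  simp only [intervalIntegral.integral_zero, mul_zero, sub_zero, zero_add] at h2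
  refine h2.congr fun z => ?_
  rw [← mul_laplaceK_sub h, ← laplaceK_succ h]
  ring

/-- With `f z = 1 / z + o (1 / z)`, the integral over an initial segment `[0, B]` is a constant and the
remaining error is at most `c / 2 * log T`; both are absorbed by `c * log T` for large `T`. -/
lemma integral_div_log_tendsto_one {f : ℝ → ℝ} (hf : Continuous f)
    (hlim : Tendsto (fun z => z * f z) atTop (nhds 1)) :
    Tendsto (fun T => (∫ z in (0:ℝ)..T, f z) / Real.log T) atTop (nhds 1) := by
  have hlo : (fun T => (∫ z in (0:ℝ)..T, f z) - Real.log T) =o[atTop] Real.log := by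
    rw [Asymptotics.isLittleO_iff]
    intro c hc
    obtain ⟨A, hA⟩ := eventually_atTop.1 ((Metric.tendsto_nhds.1 hlim) (c / 2) (by positivity))
    set B := max A 1 with hB
    have hB1 : 1 ≤ B := le_max_right _ _
    have hB0 : 0 < B := by linarith
    have hpt : ∀ z, B ≤ z → |f z - z⁻¹| ≤ c / 2 * z⁻¹ := by
      intro z hz
      have hz0 : 0 < z := by linarith
      have h1 := (hA z ((le_max_left _ _).trans hz)).le
      rw [Real.dist_eq] at h1
      have h2 : f z - z⁻¹ = (z * f z - 1) * z⁻¹ := by field_simp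
      rw [h2, abs_mul, abs_of_pos (inv_pos.2 hz0)]
      gcongr
    have hev := Real.tendsto_log_atTop.eventually_ge_atTop
      (2 / c * |(∫ z in (0:ℝ)..B, f z) - Real.log B|)
    filter_upwards [hev, eventually_ge_atTop B] with T hT hBT
    have hT0 : 0 < T := by linarith
    have hinv : IntervalIntegrable (fun z : ℝ => z⁻¹) volume B T :=
      intervalIntegrable_inv (fun z hz => by
        rw [Set.uIcc_of_le hBT] at hz
        linarith [hz.1]) continuousOn_id
    have hint : (∫ z in B..T, z⁻¹) = Real.log T - Real.log B := by
      rw [integral_inv_of_pos hB0 hT0, Real.log_div hT0.ne' hB0.ne']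
    have hbd : |∫ z in B..T, (f z - z⁻¹)| ≤ ∫ z in B..T, c / 2 * z⁻¹ := by
      rw [← Real.norm_eq_abs]
      refine norm_integral_le_of_norm_le hBT
        (Eventually.of_forall fun z hz => hpt z hz.1.le) (hinv.const_mul _)
    rw [intervalIntegral.integral_sub (hf.intervalIntegrable _ _) hinv,
      intervalIntegral.integral_const_mul, hint] at hbd
    have hsplit := integral_add_adjacent_intervals
      (hf.intervalIntegrable (μ := volume) 0 B) (hf.intervalIntegrable B T)
    have hlogB : 0 ≤ Real.log B := Real.log_nonneg hB1
    have hlogT : 0 ≤ Real.log T := Real.log_nonneg (hB1.trans hBT)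
    rw [Real.norm_eq_abs, Real.norm_of_nonneg hlogT, ← hsplit]
    have hC : |(∫ z in (0:ℝ)..B, f z) - Real.log B| ≤ c / 2 * Real.log T := by
      calc _ = c / 2 * (2 / c * |(∫ z in (0:ℝ)..B, f z) - Real.log B|) := by field_simp
        _ ≤ _ := by gcongr
    calc _ = |((∫ z in (0:ℝ)..B, f z) - Real.log B) +
          ((∫ z in B..T, f z) - (Real.log T - Real.log B))| := by congr 1; ring
      _ ≤ _ := abs_add_le _ _
      _ ≤ c * Real.log T := by nlinarith
  have hne : ∀ᶠ T in atTop, Real.log T ≠ 0 :=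
    (Real.tendsto_log_atTop.eventually_gt_atTop 0).mono fun _ h => h.ne'
  have h1 := hlo.tendsto_div_nhds_zero.add_const 1
  rw [zero_add] at h1
  refine h1.congr' ?_
  filter_upwards [hne] with T hT
  field_simp
  ring

lemma inner_eq_laplaceK (α₁ α₂ : ℝ) (h₂ : α₂ = -1 - α₁) {z : ℝ} (hz : 0 < z) :
    (∫ x in (0:ℝ)..z, Real.exp (x - z) * x ^ α₁ * z ^ α₂) = laplaceK α₁ z := by
  have h := smul_integral_comp_mul_left (a := 0) (b := 1)
    (fun x : ℝ => Real.exp (x - z) * x ^ α₁ * z ^ α₂) z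
  rw [mul_zero, mul_one] at h
  rw [← h, laplaceK, smul_eq_mul, ← intervalIntegral.integral_const_mul]
  refine intervalIntegral.integral_congr_ae (Eventually.of_forall fun u hu => ?_)
  rw [Set.uIoc_of_le zero_le_one] at hu
  have hpow : z * (z ^ α₁ * z ^ α₂) = 1 := by
    rw [← Real.rpow_add hz, h₂, show α₁ + (-1 - α₁) = -1 by ring, Real.rpow_neg_one,
      mul_inv_cancel₀ hz.ne']
  simp only [Real.mul_rpow hz.le hu.1.le, show z * u - z = -(z * (1 - u)) by ring]
  linear_combination (Real.exp (-(z * (1 - u))) * u ^ α₁) * hpow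

theorem stmt_3 (α₁ α₂ : ℝ) (h₁ : -1 < α₁) (h₂ : α₂ = -1 - α₁) :
    Filter.Tendsto
      (fun T : ℝ =>
        (∫ z in (0:ℝ)..T, ∫ x in (0:ℝ)..z, Real.exp (x - z) * x ^ α₁ * z ^ α₂)
          / Real.log T)
      Filter.atTop (nhds 1) := by
  refine (integral_div_log_tendsto_one (laplaceK_continuous h₁)
    (mul_laplaceK_tendsto_one h₁)).congr' ?_
  filter_upwards [eventually_ge_atTop 0] with T hT
  congr 1
  refine intervalIntegral.integral_congr_ae (Eventually.of_forall fun z hz => ?_)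
  rw [Set.uIoc_of_le hT] at hz
  exact (inner_eq_laplaceK α₁ α₂ h₂ hz.1).symm
end

section
/- Let α₁ > -1 and α₂ ∈ ℝ with δ := 1 + α₁ + α₂ ∈ (0, 1). Then, as T → ∞, ∬_{0 ≤ x ≤ z ≤ T} e^{x−z} x^{α₁} z^{α₂} dx dz = δ^{-1} T^δ + α₂ Γ(δ) B(1+α₁, 1−δ) − (α₁/(α₁+α₂)) T^{δ−1} + O(T^{δ−2}); that is, the difference between the double integral and δ^{-1} T^δ + α₂ Γ(δ) B(1+α₁, 1−δ) − (α₁/(α₁+α₂)) T^{δ−1} is O(T^{δ−2}) as T → ∞. (Note α₁ + α₂ = δ − 1 ≠ 0.) -/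
open MeasureTheory intervalIntegral

/-- The function `e^{-z} ∫₀^z e^x x^a dx`, which solves `F' = z^a - F`. -/
noncomputable def expConv (a z : ℝ) : ℝ := Real.exp (-z) * ∫ x in (0:ℝ)..z, Real.exp x * x ^ a

lemma intervalIntegrable_exp_mul_rpow {a : ℝ} (ha : -1 < a) (u v : ℝ) :
    IntervalIntegrable (fun x => Real.exp x * x ^ a) volume u v :=
  (intervalIntegral.intervalIntegrable_rpow' ha).continuousOn_mul Real.continuous_exp.continuousOn

lemma inner_integral_eq (a b z : ℝ) :
    ∫ x in (0:ℝ)..z, Real.exp (x - z) * x ^ a * z ^ b = z ^ b * expConv a z := by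
  rw [expConv, intervalIntegral.integral_mul_const, mul_comm (z ^ b),
    ← intervalIntegral.integral_const_mul]
  congr 2
  ext x
  rw [sub_eq_add_neg, Real.exp_add]; ring

lemma expConv_nonneg {a z : ℝ} (hz : 0 ≤ z) : 0 ≤ expConv a z := by
  refine mul_nonneg (Real.exp_pos _).le (intervalIntegral.integral_nonneg hz fun x hx => ?_)
  have := Real.rpow_nonneg hx.1 a
  positivity

lemma expConv_le {a z : ℝ} (ha : -1 < a) (hz : 0 ≤ z) : expConv a z ≤ z ^ (a + 1) / (a + 1) := by
  have h : ∫ x in (0:ℝ)..z, Real.exp x * x ^ a ≤ ∫ x in (0:ℝ)..z, Real.exp z * x ^ a := by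
    refine intervalIntegral.integral_mono_on hz (intervalIntegrable_exp_mul_rpow ha _ _)
      ((intervalIntegral.intervalIntegrable_rpow' ha).const_mul _) fun x hx => ?_
    have := Real.rpow_nonneg hx.1 a
    gcongr
    exact hx.2
  rw [intervalIntegral.integral_const_mul, integral_rpow (Or.inl ha),
    Real.zero_rpow (by linarith), sub_zero] at h
  calc expConv a z ≤ Real.exp (-z) * (Real.exp z * (z ^ (a + 1) / (a + 1))) := by
        unfold expConv; gcongr
    _ = _ := by rw [← mul_assoc, ← Real.exp_add]; simp

lemma hasDerivAt_expConv {a z : ℝ} (ha : -1 < a) (hz : 0 < z) : HasDerivAt (expConv a) (z ^ a - expConv a z) z := by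
  have hc : ContinuousAt (fun x : ℝ => Real.exp x * x ^ a) z :=
    Real.continuous_exp.continuousAt.mul (Real.continuousAt_rpow_const _ _ (Or.inl hz.ne'))
  have hm : Measurable (fun x : ℝ => Real.exp x * x ^ a) := by fun_prop
  have h1 := intervalIntegral.integral_hasDerivAt_right
    (intervalIntegrable_exp_mul_rpow ha 0 z) (hm.stronglyMeasurable.stronglyMeasurableAtFilter) hc
  have h2 : HasDerivAt (fun z : ℝ => Real.exp (-z)) (-Real.exp (-z)) z := by
    simpa using (hasDerivAt_neg z).exp
  refine (h2.mul h1).congr_deriv ?_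
  rw [← mul_assoc, ← Real.exp_add]
  simp [expConv]; ring

/-- The substitution `x = z t` moves the dependence on `z` out of the domain of integration. -/
lemma expConv_eq_scaled {a z : ℝ} (hz : 0 < z) :
    expConv a z = z ^ (a + 1) * ∫ t in Set.Ioo (0:ℝ) 1, t ^ a * Real.exp (-((1 - t) * z)) := by
  have h := intervalIntegral.mul_integral_comp_mul_left (a := 0) (b := 1)
    (f := fun x : ℝ => Real.exp x * x ^ a) (c := z)
  rw [mul_zero, mul_one] at h
  rw [expConv, ← h, intervalIntegral.integral_of_le zero_le_one, integral_Ioc_eq_integral_Ioo,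
    ← MeasureTheory.integral_const_mul, ← MeasureTheory.integral_const_mul, ← MeasureTheory.integral_const_mul]
  refine setIntegral_congr_fun measurableSet_Ioo fun t ht => ?_
  rw [Real.mul_rpow hz.le ht.1.le, Real.rpow_add_one hz.ne',
    show -((1 - t) * z) = -z + z * t by ring, Real.exp_add]
  ring

/-- The real form of Euler's Beta integral, together with its convergence. -/
lemma beta_integral {u v : ℝ} (hu : 0 < u) (hv : 0 < v) :
    IntegrableOn (fun t : ℝ => t ^ (u - 1) * (1 - t) ^ (v - 1)) (Set.Ioo 0 1) ∧
    ∫ t in Set.Ioo (0:ℝ) 1, t ^ (u - 1) * (1 - t) ^ (v - 1) = Beta u v := by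
  have hc := Complex.betaIntegral_convergent (u := u) (v := v) (by simpa) (by simpa)
  rw [intervalIntegrable_iff_integrableOn_Ioo_of_le zero_le_one] at hc
  have heq : ∀ t ∈ Set.Ioo (0:ℝ) 1, (t:ℂ) ^ ((u:ℂ) - 1) * (1 - (t:ℂ)) ^ ((v:ℂ) - 1)
      = ((t ^ (u - 1) * (1 - t) ^ (v - 1) : ℝ) : ℂ) := by
    intro t ht
    push_cast
    rw [Complex.ofReal_cpow ht.1.le, Complex.ofReal_cpow (by linarith [ht.2])]
    push_cast
    rfl
  have hc' := hc.congr_fun heq measurableSet_Ioo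
  refine ⟨by simpa [IntegrableOn] using hc'.re, ?_⟩
  have h := ProbabilityTheory.beta_eq_betaIntegralReal u v hu hv
  rw [Complex.betaIntegral, intervalIntegral.integral_of_le zero_le_one,
    integral_Ioc_eq_integral_Ioo, setIntegral_congr_fun measurableSet_Ioo heq,
    integral_complex_ofReal, Complex.ofReal_re] at h
  exact h.symm

/-- Source of the constant term. After scaling, the order of integration is exchanged (the integrand
is nonnegative): the `z`-integral is a Gamma integral equal to `Γ(δ) (1 - t)^{-δ}`, and the remaining
`t`-integral is a Beta integral. -/
lemma integral_rpow_mul_expConv {a b : ℝ} (ha : -1 < a) (hδ₁ : 0 < 1 + a + b) (hδ₂ : 1 + a + b < 1) :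
    IntegrableOn (fun z => z ^ (b - 1) * expConv a z) (Set.Ioi 0) ∧
    ∫ z in Set.Ioi (0:ℝ), z ^ (b - 1) * expConv a z
      = Real.Gamma (1 + a + b) * Beta (1 + a) (1 - (1 + a + b)) := by
  set δ := 1 + a + b with hδ
  set f : ℝ → ℝ → ℝ := fun z t => t ^ a * (z ^ (δ - 1) * Real.exp (-((1 - t) * z))) with hf
  obtain ⟨hB1, hB2⟩ := beta_integral (u := 1 + a) (v := 1 - δ) (by linarith) (by linarith)
  have hinner : ∀ t ∈ Set.Ioo (0:ℝ) 1, ∫ z in Set.Ioi (0:ℝ), f z t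
      = Real.Gamma δ * (t ^ (1 + a - 1) * (1 - t) ^ (1 - δ - 1)) := by
    intro t ht
    have h1t : 0 < 1 - t := by linarith [ht.2]
    simp only [hf]
    rw [MeasureTheory.integral_const_mul, Real.integral_rpow_mul_exp_neg_mul_Ioi hδ₁ h1t, one_div,
      Real.inv_rpow h1t.le, ← Real.rpow_neg h1t.le]
    ring_nf
  have hfm : Measurable (Function.uncurry f) := by
    simp only [hf, Function.uncurry_def]; fun_prop
  have hint : Integrable (Function.uncurry f)
      ((volume.restrict (Set.Ioi 0)).prod (volume.restrict (Set.Ioo 0 1))) := by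
    rw [integrable_prod_iff' hfm.aestronglyMeasurable]
    constructor
    · refine ae_restrict_of_forall_mem measurableSet_Ioo fun t ht => ?_
      have := integrableOn_rpow_mul_exp_neg_mul_rpow (p := 1) (s := δ - 1) (b := 1 - t)
        (by linarith) one_pos (by linarith [ht.2])
      simp only [Real.rpow_one, neg_mul] at this
      exact this.const_mul (t ^ a)
    · refine IntegrableOn.congr_fun (hB1.const_mul (Real.Gamma δ)) (fun t ht => ?_)
        measurableSet_Ioo
      rw [← hinner t ht]
      refine setIntegral_congr_fun measurableSet_Ioi fun z hz => ?_
      have hz : 0 < z := hz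
      have ht := ht.1
      simp only [Function.uncurry_apply_pair, hf]
      rw [Real.norm_of_nonneg (by positivity)]
  have hG : ∀ z ∈ Set.Ioi (0:ℝ), ∫ t in Set.Ioo (0:ℝ) 1, f z t = z ^ (b - 1) * expConv a z := by
    intro z hz
    have hz : 0 < z := hz
    rw [expConv_eq_scaled hz, ← mul_assoc, ← Real.rpow_add hz, ← MeasureTheory.integral_const_mul]
    refine setIntegral_congr_fun measurableSet_Ioo fun t ht => ?_
    simp only [hf]
    rw [show b - 1 + (a + 1) = δ - 1 by rw [hδ]; ring]
    ring
  constructor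
  · exact IntegrableOn.congr_fun hint.integral_prod_left hG measurableSet_Ioi
  · rw [← setIntegral_congr_fun measurableSet_Ioi hG, integral_integral_swap hint,
      setIntegral_congr_fun measurableSet_Ioo hinner, MeasureTheory.integral_const_mul, hB2]

/-- Up to a constant, `x^c e^{x/2}` is increasing on `[1, ∞)`: the ratio
`T / x ≤ 1 + (T - x)` grows more slowly than any exponential in `T - x`. -/
lemma rpow_mul_exp_half_le (c : ℝ) : ∃ K : ℝ, 0 < K ∧ ∀ x T : ℝ, 1 ≤ x → x ≤ T →
    x ^ c * Real.exp (x / 2) ≤ K * (T ^ c * Real.exp (T / 2)) := by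
  set n : ℝ := |c| + 1 with hn
  have hn0 : 0 < n := by positivity
  -- From `y ≤ e^y` with `y = (1 + T - x) / (2 * n)`, raised to the power `n > |c|`.
  refine ⟨(2 * n) ^ n * Real.exp (1 / 2), by positivity, fun x T hx hxT => ?_⟩
  have hx0 : 0 < x := by linarith
  have hT0 : 0 < T := by linarith
  have h1 : (T / x) ^ (-c) ≤ (2 * n) ^ n * Real.exp ((1 + T - x) / 2) := by
    have hTx : 1 ≤ T / x := by rwa [one_le_div hx0]
    have hle : T / x ≤ 2 * n * Real.exp ((1 + T - x) / (2 * n)) := by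
      have h2 : T / x ≤ 1 + T - x := by
        rw [div_le_iff₀ hx0]; nlinarith
      have h3 := Real.add_one_le_exp ((1 + T - x) / (2 * n))
      have h4 : 1 + T - x = 2 * n * ((1 + T - x) / (2 * n)) := by field_simp
      calc T / x ≤ 2 * n * ((1 + T - x) / (2 * n)) := by rw [← h4]; exact h2
        _ ≤ _ := by gcongr; linarith
    calc (T / x) ^ (-c) ≤ (T / x) ^ n :=
          Real.rpow_le_rpow_of_exponent_le hTx (by linarith [neg_abs_le c])
      _ ≤ (2 * n * Real.exp ((1 + T - x) / (2 * n))) ^ n :=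
          Real.rpow_le_rpow (by positivity) hle hn0.le
      _ = _ := by
          rw [Real.mul_rpow (by positivity) (by positivity), ← Real.exp_mul]
          congr 2
          field_simp
  have h5 : x ^ c = T ^ c * (T / x) ^ (-c) := by
    rw [Real.rpow_neg (by positivity), Real.div_rpow hT0.le hx0.le]
    have := Real.rpow_pos_of_pos hT0 c
    have := Real.rpow_pos_of_pos hx0 c
    field_simp
  calc x ^ c * Real.exp (x / 2)
      ≤ T ^ c * ((2 * n) ^ n * Real.exp ((1 + T - x) / 2)) * Real.exp (x / 2) := by
        rw [h5]; gcongr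
    _ = (2 * n) ^ n * T ^ c * (Real.exp ((1 + T - x) / 2) * Real.exp (x / 2)) := by ring
    _ = (2 * n) ^ n * T ^ c * (Real.exp (1 / 2) * Real.exp (T / 2)) := by
        rw [← Real.exp_add, ← Real.exp_add]; ring_nf
    _ = _ := by ring

/-- `F(T) = T^a + O(T^{a-1})`, by one integration by parts on `[1, T]`; the contribution of `[0, 1]` is
exponentially small. -/
lemma abs_expConv_sub_rpow_le {a : ℝ} (ha : -1 < a) : ∃ K : ℝ, 0 < K ∧ ∀ T : ℝ, 1 ≤ T →
    |expConv a T - T ^ a| ≤ K * T ^ (a - 1) := by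
  obtain ⟨K, hK, hKle⟩ := rpow_mul_exp_half_le (a - 1)
  set A : ℝ := (∫ x in (0:ℝ)..1, Real.exp x * x ^ a) - Real.exp 1 with hA
  -- The summand `1` only makes the constant strictly positive.
  refine ⟨|A| * K + |a| * (2 * K) + 1, by positivity, fun T hT => ?_⟩
  have hT0 : 0 < T := by linarith
  have hsub : Set.uIcc 1 T ⊆ Set.Ioi 0 := by
    rw [Set.uIcc_of_le hT]; exact fun x hx => lt_of_lt_of_le one_pos hx.1
  have hci : ∀ c : ℝ, IntervalIntegrable (fun x => Real.exp x * x ^ c) volume 1 T := fun c =>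
    ContinuousOn.intervalIntegrable (Real.continuous_exp.continuousOn.mul
      (continuousOn_id.rpow_const fun x hx => Or.inl (hsub hx).ne'))
  have hibp : ∫ x in (1:ℝ)..T, (Real.exp x * x ^ a + a * (Real.exp x * x ^ (a - 1)))
      = Real.exp T * T ^ a - Real.exp 1 := by
    rw [intervalIntegral.integral_eq_sub_of_hasDerivAt
      (f := fun x => Real.exp x * x ^ a) _ ((hci a).add ((hci (a - 1)).const_mul a))]
    · simp
    · intro x hx
      refine ((Real.hasDerivAt_exp x).mul
        (Real.hasDerivAt_rpow_const (p := a) (Or.inl (hsub hx).ne'))).congr_deriv ?_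
      ring
  rw [intervalIntegral.integral_add (hci a) ((hci (a - 1)).const_mul a),
    intervalIntegral.integral_const_mul] at hibp
  set J := ∫ x in (1:ℝ)..T, Real.exp x * x ^ (a - 1) with hJ
  have hsplit := intervalIntegral.integral_add_adjacent_intervals
    (intervalIntegrable_exp_mul_rpow ha 0 1) (hci a)
  have hkey : expConv a T - T ^ a = Real.exp (-T) * (A - a * J) := by
    have : T ^ a = Real.exp (-T) * (Real.exp T * T ^ a) := by
      rw [← mul_assoc, ← Real.exp_add]; simp
    rw [this, expConv, ← hsplit, hA]
    rw [← mul_sub]; congr 1; linarith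
  have hJ0 : 0 ≤ J := intervalIntegral.integral_nonneg hT fun x hx => by
    have : 0 < x := lt_of_lt_of_le one_pos hx.1
    positivity
  have hee : Real.exp (T / 2) * Real.exp (T / 2) = Real.exp T := by
    rw [← Real.exp_add]; ring_nf
  have hJle : J ≤ 2 * K * (T ^ (a - 1) * Real.exp T) := by
    have h1 : J ≤ ∫ x in (1:ℝ)..T, K * (T ^ (a - 1) * Real.exp (T / 2)) * Real.exp (x / 2) := by
      refine intervalIntegral.integral_mono_on hT (hci _)
        (Continuous.intervalIntegrable (by fun_prop) _ _) fun x hx => ?_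
      calc Real.exp x * x ^ (a - 1) = (x ^ (a - 1) * Real.exp (x / 2)) * Real.exp (x / 2) := by
            rw [mul_assoc, ← Real.exp_add]; ring_nf
        _ ≤ _ := mul_le_mul_of_nonneg_right (hKle x T hx.1 hx.2) (Real.exp_pos _).le
    have h2 : ∫ x in (1:ℝ)..T, Real.exp (x / 2) ≤ 2 * Real.exp (T / 2) := by
      rw [intervalIntegral.integral_comp_div (fun x => Real.exp x) two_ne_zero, integral_exp]
      have := Real.exp_pos (1 / 2)
      simp only [smul_eq_mul]; linarith
    rw [intervalIntegral.integral_const_mul] at h1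
    calc J ≤ K * (T ^ (a - 1) * Real.exp (T / 2)) * (2 * Real.exp (T / 2)) :=
          h1.trans (by gcongr)
      _ = 2 * K * (T ^ (a - 1) * (Real.exp (T / 2) * Real.exp (T / 2))) := by ring
      _ = _ := by rw [hee]
  have hone : 1 ≤ K * (T ^ (a - 1) * Real.exp T) := by
    have h1 := hKle 1 T le_rfl hT
    rw [Real.one_rpow, one_mul] at h1
    calc (1:ℝ) ≤ Real.exp (1 / 2) := Real.one_le_exp (by norm_num)
      _ ≤ _ := h1
      _ ≤ _ := by gcongr; linarith
  have hfin : |A - a * J| ≤ (|A| * K + |a| * (2 * K)) * (T ^ (a - 1) * Real.exp T) := by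
    calc |A - a * J| ≤ |A| + |a * J| := abs_sub _ _
      _ = |A| * 1 + |a| * J := by rw [abs_mul, abs_of_nonneg hJ0, mul_one]
      _ ≤ |A| * (K * (T ^ (a - 1) * Real.exp T)) + |a| * (2 * K * (T ^ (a - 1) * Real.exp T)) := by
          gcongr
      _ = _ := by ring
  rw [hkey, abs_mul, abs_of_pos (Real.exp_pos _)]
  have hp := Real.rpow_pos_of_pos hT0 (a - 1)
  calc Real.exp (-T) * |A - a * J|
      ≤ Real.exp (-T) * ((|A| * K + |a| * (2 * K)) * (T ^ (a - 1) * Real.exp T)) := by gcongr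
    _ = (|A| * K + |a| * (2 * K)) * T ^ (a - 1) * (Real.exp (-T) * Real.exp T) := by ring
    _ = (|A| * K + |a| * (2 * K)) * T ^ (a - 1) := by rw [← Real.exp_add]; simp
    _ ≤ _ := mul_le_mul_of_nonneg_right (by linarith) hp.le

/-- The exact identity behind the expansion: integrate `(z^b F)' = b z^{b-1} F + z^{a+b} - z^b F`
over `(0, T)`; the boundary term at `0` vanishes because `z^b F = O(z^{1+a+b})`. -/
lemma integral_expConv_by_parts {a b : ℝ} (ha : -1 < a) (hδ₁ : 0 < 1 + a + b) (hδ₂ : 1 + a + b < 1)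
    {T : ℝ} (hT : 0 < T) :
    ∫ z in (0:ℝ)..T, z ^ b * expConv a z
      = (1 + a + b)⁻¹ * T ^ (1 + a + b) - T ^ b * expConv a T
        + b * ∫ z in (0:ℝ)..T, z ^ (b - 1) * expConv a z := by
  have hi1 : IntervalIntegrable (fun z => z ^ (b - 1) * expConv a z) volume 0 T := by
    rw [intervalIntegrable_iff_integrableOn_Ioc_of_le hT.le]
    exact (integral_rpow_mul_expConv ha hδ₁ hδ₂).1.mono_set Set.Ioc_subset_Ioi_self
  have hi2 : IntervalIntegrable (fun z => z ^ b * expConv a z) volume 0 T := by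
    have h := hi1.continuousOn_mul (g := fun z => z) continuousOn_id
    refine h.congr fun z hz => ?_
    rw [Set.uIoc_of_le hT.le] at hz
    rw [← mul_assoc, Real.rpow_sub_one hz.1.ne', mul_div_cancel₀ _ hz.1.ne']
  have hi3 : IntervalIntegrable (fun z : ℝ => z ^ (a + b)) volume 0 T :=
    intervalIntegral.intervalIntegrable_rpow' (by linarith)
  have hderiv : ∀ z : ℝ, 0 < z → HasDerivAt (fun z => z ^ b * expConv a z)
      (b * (z ^ (b - 1) * expConv a z) + (z ^ (a + b) - z ^ b * expConv a z)) z := by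
    intro z hz
    refine ((Real.hasDerivAt_rpow_const (p := b) (Or.inl hz.ne')).mul
      (hasDerivAt_expConv ha hz)).congr_deriv ?_
    rw [Real.rpow_add hz]; ring
  have hzero : Filter.Tendsto (fun z => z ^ b * expConv a z) (nhdsWithin 0 (Set.Ioi 0)) (nhds 0) := by
    have hlim : Filter.Tendsto (fun z : ℝ => z ^ (1 + a + b) / (a + 1))
        (nhdsWithin 0 (Set.Ioi 0)) (nhds 0) := by
      have : ContinuousAt (fun z : ℝ => z ^ (1 + a + b) / (a + 1)) 0 :=
        (Real.continuousAt_rpow_const _ _ (Or.inr hδ₁.le)).div_const _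
      simpa [Real.zero_rpow hδ₁.ne'] using this.tendsto.mono_left nhdsWithin_le_nhds
    refine tendsto_of_tendsto_of_tendsto_of_le_of_le' tendsto_const_nhds hlim ?_ ?_
    · filter_upwards [self_mem_nhdsWithin] with z hz
      have hz : 0 < z := hz
      exact mul_nonneg (by positivity) (expConv_nonneg hz.le)
    · filter_upwards [self_mem_nhdsWithin] with z hz
      have hz : 0 < z := hz
      calc z ^ b * expConv a z ≤ z ^ b * (z ^ (a + 1) / (a + 1)) := by
            gcongr; exact expConv_le ha hz.le
        _ = z ^ (1 + a + b) / (a + 1) := by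
            rw [mul_div_assoc', ← Real.rpow_add hz]; ring_nf
  have h := intervalIntegral.integral_eq_sub_of_hasDerivAt_of_tendsto hT
    (fun z hz => hderiv z hz.1) ((hi1.const_mul b).add (hi3.sub hi2)) hzero
    ((hderiv T hT).continuousAt.tendsto.mono_left nhdsWithin_le_nhds)
  rw [intervalIntegral.integral_add (hi1.const_mul b) (hi3.sub hi2),
    intervalIntegral.integral_sub hi3 hi2, intervalIntegral.integral_const_mul,
    integral_rpow (Or.inl (by linarith)), Real.zero_rpow (by linarith),
    show a + b + 1 = 1 + a + b by ring, sub_zero, sub_zero] at h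
  rw [inv_mul_eq_div]
  linarith

lemma abs_tail_sub_le {a b : ℝ} (ha : -1 < a) (hδ₁ : 0 < 1 + a + b) (hδ₂ : 1 + a + b < 1) :
    ∃ K : ℝ, 0 < K ∧ ∀ T : ℝ, 1 ≤ T →
    |(∫ z in Set.Ioi T, z ^ (b - 1) * expConv a z) - T ^ (a + b) / (-(a + b))| ≤ K * T ^ (a + b - 1) := by
  obtain ⟨K, hK, hKle⟩ := abs_expConv_sub_rpow_le ha
  have hpos : 0 < 1 - (a + b) := by linarith
  refine ⟨K / (1 - (a + b)), by positivity, fun T hT => ?_⟩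
  have hT0 : 0 < T := by linarith
  have hint := (integral_rpow_mul_expConv ha hδ₁ hδ₂).1.mono_set (Set.Ioi_subset_Ioi hT0.le)
  have hr1 := integrableOn_Ioi_rpow_of_lt (a := a + b - 1) (by linarith) hT0
  have hr2 := integrableOn_Ioi_rpow_of_lt (a := a + b - 2) (by linarith) hT0
  have e1 : T ^ (a + b) / (-(a + b)) = ∫ z in Set.Ioi T, z ^ (a + b - 1) := by
    rw [integral_Ioi_rpow_of_lt (by linarith) hT0, sub_add_cancel, div_neg, neg_div]
  have e2 : K / (1 - (a + b)) * T ^ (a + b - 1) = ∫ z in Set.Ioi T, K * z ^ (a + b - 2) := by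
    rw [MeasureTheory.integral_const_mul, integral_Ioi_rpow_of_lt (by linarith) hT0,
      show a + b - 2 + 1 = -(1 - (a + b)) by ring, neg_div_neg_eq,
      show -(1 - (a + b)) = a + b - 1 by ring]
    ring
  rw [e1, e2, ← MeasureTheory.integral_sub hint hr1]
  rw [← Real.norm_eq_abs]
  refine norm_integral_le_of_norm_le (hr2.const_mul K)
    (ae_restrict_of_forall_mem measurableSet_Ioi fun z hz => ?_)
  have hz1 : 1 ≤ z := hT.trans (le_of_lt hz)
  have hz0 : 0 < z := by linarith
  have e3 : z ^ (a + b - 1) = z ^ (b - 1) * z ^ a := by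
    rw [← Real.rpow_add hz0]; ring_nf
  have e4 : z ^ (a + b - 2) = z ^ (b - 1) * z ^ (a - 1) := by
    rw [← Real.rpow_add hz0]; ring_nf
  have hb := Real.rpow_pos_of_pos hz0 (b - 1)
  rw [e3, ← mul_sub, Real.norm_eq_abs, abs_mul, abs_of_pos hb, e4]
  calc _ ≤ z ^ (b - 1) * (K * z ^ (a - 1)) := by gcongr; exact hKle z hz1
    _ = _ := by ring

theorem stmt_4 (α₁ α₂ δ : ℝ) (h₁ : -1 < α₁) (hδ : δ = 1 + α₁ + α₂)
    (hδ₁ : 0 < δ) (hδ₂ : δ < 1) :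
    ∃ M : ℝ, 0 < M ∧ ∃ a : ℝ, 0 < a ∧ ∀ T : ℝ, a < T →
      |(∫ z in (0:ℝ)..T, ∫ x in (0:ℝ)..z, Real.exp (x - z) * x ^ α₁ * z ^ α₂)
        - (δ⁻¹ * T ^ δ + α₂ * Real.Gamma δ * Beta (1 + α₁) (1 - δ)
            - (α₁ / (α₁ + α₂)) * T ^ (δ - 1))|
      ≤ M * T ^ (δ - 2) := by
  subst hδ
  obtain ⟨K, hK, hKle⟩ := abs_expConv_sub_rpow_le h₁
  obtain ⟨L, hL, hLle⟩ := abs_tail_sub_le h₁ hδ₁ hδ₂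
  refine ⟨K + |α₂| * L, by positivity, 1, one_pos, fun T hT => ?_⟩
  have hT0 : 0 < T := by linarith
  obtain ⟨hint, hval⟩ := integral_rpow_mul_expConv h₁ hδ₁ hδ₂
  have hsplit := intervalIntegral.integral_Ioi_sub_Ioi hint hT0.le
  simp_rw [inner_integral_eq]
  rw [integral_expConv_by_parts h₁ hδ₁ hδ₂ hT0, ← hsplit, hval]
  set R := ∫ z in Set.Ioi T, z ^ (α₂ - 1) * expConv α₁ z with hR
  have hne : α₁ + α₂ ≠ 0 := by linarith
  have e1 : T ^ (α₁ + α₂) = T ^ α₂ * T ^ α₁ := by rw [← Real.rpow_add hT0]; ring_nf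
  have e2 : T ^ (α₁ + α₂ - 1) = T ^ α₂ * T ^ (α₁ - 1) := by
    rw [← Real.rpow_add hT0]; ring_nf
  have e3 : 1 + α₁ + α₂ - 1 = α₁ + α₂ := by ring
  have e4 : 1 + α₁ + α₂ - 2 = α₁ + α₂ - 1 := by ring
  rw [e3, e4]
  -- The boundary term and the tail contribute `-1 + α₂ / (α₁ + α₂) = -α₁ / (α₁ + α₂)` times
  -- `T ^ (α₁ + α₂)`.
  have hcoef : α₁ / (α₁ + α₂) * T ^ (α₁ + α₂)
      = T ^ (α₁ + α₂) + α₂ * (T ^ (α₁ + α₂) / (-(α₁ + α₂))) := by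
    field_simp; ring
  have hpos := Real.rpow_pos_of_pos hT0 α₂
  rw [hcoef]
  have hb1 : |T ^ α₂ * (expConv α₁ T - T ^ α₁)| ≤ K * T ^ (α₁ + α₂ - 1) := by
    rw [abs_mul, abs_of_pos hpos, e2]
    calc _ ≤ T ^ α₂ * (K * T ^ (α₁ - 1)) := by gcongr; exact hKle T hT.le
      _ = _ := by ring
  have hb2 : |α₂ * (R - T ^ (α₁ + α₂) / (-(α₁ + α₂)))| ≤ |α₂| * (L * T ^ (α₁ + α₂ - 1)) := by
    rw [abs_mul]; gcongr; exact hLle T hT.le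
  rw [mul_sub, ← e1] at hb1
  rw [mul_sub] at hb2
  rw [abs_le] at hb1 hb2 ⊢
  constructor <;> nlinarith [hb1.1, hb1.2, hb2.1, hb2.2]
end

section
/- Let H ∈ (0, 1), α ∈ (0, H), and T > 0. Then lim_{t → T⁻} (T−t)^{1−α} ∫_0^t (T−u)^{−α−1} (t−u)^{2H−1} du = 0. -/
/-!
Put `ε = H - α > 0` and split `α + 1 = (1 - H) + (H + α)`, both summands being positive. For
`0 < u < t < T` we have `T - u ≥ T - t` and `T - u ≥ t - u`, hence
`(T - u) ^ (-α - 1) * (t - u) ^ (2 * H - 1) ≤ (T - t) ^ (H - 1) * (t - u) ^ (ε - 1)`.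
The right-hand side integrates over `[0, t]` to `(T - t) ^ (H - 1) * (t ^ ε / ε)`, so the quantity
under the limit is at most `(T - t) ^ ε * (t ^ ε / ε)`, which tends to `0`.
-/

open MeasureTheory intervalIntegral Filter

lemma integrand_le {H α T t u : ℝ} (hH₁ : 0 < H) (hH₂ : H < 1) (hα₁ : 0 < α)
    (hut : u < t) (htT : t < T) :
    (T - u) ^ (-α - 1) * (t - u) ^ (2 * H - 1)
      ≤ (T - t) ^ (H - 1) * (t - u) ^ (H - α - 1) := by
  have h1 : 0 < T - t := by linarith
  have h2 : 0 < t - u := by linarith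
  have h3 : 0 < T - u := by linarith
  calc (T - u) ^ (-α - 1) * (t - u) ^ (2 * H - 1)
      = (T - u) ^ (H - 1) * (T - u) ^ (-(H + α)) * (t - u) ^ (2 * H - 1) := by
        rw [← Real.rpow_add h3]; ring_nf
    _ ≤ (T - t) ^ (H - 1) * (t - u) ^ (-(H + α)) * (t - u) ^ (2 * H - 1) := by
        have e1 : (T - u) ^ (H - 1) ≤ (T - t) ^ (H - 1) :=
          Real.rpow_le_rpow_of_nonpos h1 (by linarith) (by linarith)
        have e2 : (T - u) ^ (-(H + α)) ≤ (t - u) ^ (-(H + α)) :=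
          Real.rpow_le_rpow_of_nonpos h2 (by linarith) (by linarith)
        gcongr
    _ = (T - t) ^ (H - 1) * (t - u) ^ (H - α - 1) := by
        rw [mul_assoc, ← Real.rpow_add h2]; ring_nf

lemma abs_integral_le {H α T t : ℝ} (hH₁ : 0 < H) (hH₂ : H < 1) (hα₁ : 0 < α) (hα₂ : α < H)
    (ht : 0 < t) (htT : t < T) :
    ‖∫ u in (0:ℝ)..t, (T - u) ^ (-α - 1) * (t - u) ^ (2 * H - 1)‖
      ≤ (T - t) ^ (H - 1) * (t ^ (H - α) / (H - α)) := by
  have hint : IntervalIntegrable (fun u : ℝ => (t - u) ^ (H - α - 1)) volume 0 t := by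
    have h := (intervalIntegrable_rpow' (a := t) (b := 0) (r := H - α - 1)
      (by linarith)).comp_sub_left t
    simpa using h
  have hval : ∫ u in (0:ℝ)..t, (t - u) ^ (H - α - 1) = t ^ (H - α) / (H - α) := by
    rw [integral_comp_sub_left (fun x : ℝ => x ^ (H - α - 1)) t,
      integral_rpow (Or.inl (by linarith))]
    have h0 : H - α ≠ 0 := by linarith
    simp [Real.zero_rpow h0]
  rw [← hval, ← intervalIntegral.integral_const_mul]
  refine norm_integral_le_of_norm_le ht.le ?_ (hint.const_mul _)
  -- The pointwise bound can fail at `u = t`, because `0 ^ 0 = 1` when `H = 1 / 2`.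
  filter_upwards [Measure.ae_ne volume t] with u hne hu
  have hut : u < t := lt_of_le_of_ne hu.2 hne
  rw [Real.norm_of_nonneg]
  · exact integrand_le hH₁ hH₂ hα₁ hut htT
  · exact mul_nonneg (Real.rpow_nonneg (by linarith) _) (Real.rpow_nonneg (by linarith) _)

theorem stmt_14 (H α T : ℝ) (hH₁ : 0 < H) (hH₂ : H < 1) (hα₁ : 0 < α) (hα₂ : α < H)
    (hT : 0 < T) :
    Filter.Tendsto
      (fun t : ℝ => (T - t) ^ (1 - α)
        * ∫ u in (0:ℝ)..t, (T - u) ^ (-α - 1) * (t - u) ^ (2*H - 1))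
      (nhdsWithin T (Set.Iio T)) (nhds 0) := by
  have hε : 0 < H - α := by linarith
  have hlim : Tendsto (fun t : ℝ => (T - t) ^ (H - α) * (t ^ (H - α) / (H - α)))
      (nhdsWithin T (Set.Iio T)) (nhds 0) := by
    have hc : Continuous (fun t : ℝ => (T - t) ^ (H - α) * (t ^ (H - α) / (H - α))) :=
      ((continuous_const.sub continuous_id).rpow_const fun _ => Or.inr hε.le).mul
        ((continuous_id.rpow_const fun _ => Or.inr hε.le).div_const _)
    have h := (hc.tendsto T).mono_left (nhdsWithin_le_nhds (s := Set.Iio T))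
    simpa [Real.zero_rpow hε.ne'] using h
  refine squeeze_zero_norm' ?_ hlim
  filter_upwards [self_mem_nhdsWithin, nhdsWithin_le_nhds (Ioi_mem_nhds hT)] with t htT ht
  have htT' : t < T := htT
  have h1 : 0 < T - t := by linarith
  rw [norm_mul, Real.norm_of_nonneg (Real.rpow_nonneg h1.le _)]
  calc _ ≤ (T - t) ^ (1 - α) * ((T - t) ^ (H - 1) * (t ^ (H - α) / (H - α))) := by
        gcongr
        exact abs_integral_le hH₁ hH₂ hα₁ hα₂ ht htT'
    _ = _ := by
        rw [← mul_assoc, ← Real.rpow_add h1]; ring_nf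
end

section
/- Let H ∈ (0, 1), γ ∈ (H, 1), and T > 0. Then lim_{t → T⁻} (T−t)^{2(γ−H)} ∫_0^t (T−u)^{−γ−1} ( ∫_u^t (T−v)^{−γ} (v−u)^{2H−1} dv ) du = B(2H, 1+γ−2H)/(2(γ−H)). -/
/-!
Put `ε = T - t`, `c = 2(γ - H) > 0` and `f(w) = w^{-γ} (1-w)^{2H-1}`, which is integrable on `(0,1)`.
The substitution `v = T - (T-u) w` turns the inner integral into
`(T-u)^{2H-γ} G(ε/(T-u))` with `G(z) = ∫_z^1 f`, so that, in the variable `z = ε/(T-u)`, the whole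
expression becomes `∫_{ε/T}^1 z^{c-1} G(z) dz`. Integration by parts provides the explicit
antiderivative `P(z) = (z^c G(z) + ∫_0^z w^c f(w) dw) / c` of `z^{c-1} G(z)`
(`hasDerivAt_outerPrimitive`), continuous on `[0,1]`. Hence the expression equals `P(1) - P(ε/T)`
exactly (`scaled_integral_eq`), and it tends to `P(1) - P(0) = P(1) = B(2H, 1+γ-2H) / c`.
-/

open MeasureTheory intervalIntegral Filter

/-- The integrand `w^{a-1} (1-w)^{b-1}` of the Euler Beta integral. -/
noncomputable def betaKernel (a b w : ℝ) : ℝ := w ^ (a - 1) * (1 - w) ^ (b - 1)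

lemma ofReal_betaKernel (a b : ℝ) {w : ℝ} (h0 : 0 ≤ w) (h1 : w ≤ 1) :
    ((betaKernel a b w : ℝ) : ℂ) = (w : ℂ) ^ ((a : ℂ) - 1) * (1 - (w : ℂ)) ^ ((b : ℂ) - 1) := by
  rw [betaKernel, Complex.ofReal_mul, Complex.ofReal_cpow h0,
    Complex.ofReal_cpow (sub_nonneg.2 h1)]
  push_cast
  rfl

lemma intervalIntegrable_betaKernel {a b : ℝ} (ha : 0 < a) (hb : 0 < b) :
    IntervalIntegrable (betaKernel a b) volume 0 1 := by
  have h := Complex.betaIntegral_convergent (u := a) (v := b) (by simpa) (by simpa)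
  rw [intervalIntegrable_iff] at h ⊢
  refine IntegrableOn.congr_fun h.re ?_ measurableSet_uIoc
  intro w hw
  rw [Set.uIoc_of_le zero_le_one] at hw
  simp only [← ofReal_betaKernel a b hw.1.le hw.2]
  simp

lemma integral_betaKernel {a b : ℝ} (ha : 0 < a) (hb : 0 < b) :
    ∫ w in (0:ℝ)..1, betaKernel a b w = Beta b a := by
  have h := Complex.betaIntegral_eq_Gamma_mul_div a b (by simpa) (by simpa)
  have h2 : Complex.betaIntegral a b = ((∫ w in (0:ℝ)..1, betaKernel a b w : ℝ) : ℂ) := by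
    rw [Complex.betaIntegral, ← intervalIntegral.integral_ofReal]
    refine intervalIntegral.integral_congr fun w hw => ?_
    rw [Set.uIcc_of_le zero_le_one] at hw
    exact (ofReal_betaKernel a b hw.1 hw.2).symm
  rw [h2, ← Complex.ofReal_add, Complex.Gamma_ofReal, Complex.Gamma_ofReal,
    Complex.Gamma_ofReal] at h
  rw [Beta, mul_comm, add_comm b a]
  exact_mod_cast h

lemma measurable_betaKernel (a b : ℝ) : Measurable (betaKernel a b) := by
  unfold betaKernel
  fun_prop

lemma continuousAt_betaKernel (a b : ℝ) {w : ℝ} (h0 : 0 < w) (h1 : w < 1) :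
    ContinuousAt (betaKernel a b) w := by
  unfold betaKernel
  refine ContinuousAt.mul (Real.continuousAt_rpow_const _ _ (Or.inl h0.ne')) ?_
  exact ContinuousAt.rpow_const (by fun_prop) (Or.inl (sub_pos.2 h1).ne')

lemma intervalIntegrable_betaKernel_of_mem {a b : ℝ} (ha : 0 < a) (hb : 0 < b) {x y : ℝ}
    (hx : x ∈ Set.Icc (0:ℝ) 1) (hy : y ∈ Set.Icc (0:ℝ) 1) :
    IntervalIntegrable (betaKernel a b) volume x y := by
  refine (intervalIntegrable_betaKernel ha hb).mono_set ?_
  rw [Set.uIcc_of_le zero_le_one]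
  exact Set.uIcc_subset_Icc hx hy

/-- `G(z) = ∫_z^1 w^{-γ} (1-w)^{2H-1} dw`. -/
noncomputable def betaTail (H γ z : ℝ) : ℝ := ∫ w in z..1, betaKernel (1 - γ) (2 * H) w

/-- The antiderivative of `z^{c-1} G(z)`, `c = 2(γ - H)`, given by integration by parts. -/
noncomputable def outerPrimitive (H γ z : ℝ) : ℝ :=
  (z ^ (2 * (γ - H)) * betaTail H γ z
    + ∫ w in (0:ℝ)..z, betaKernel (1 + γ - 2 * H) (2 * H) w) / (2 * (γ - H))

lemma continuousOn_betaTail {H γ : ℝ} (hH₁ : 0 < H) (hγ₂ : γ < 1) :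
    ContinuousOn (betaTail H γ) (Set.Icc 0 1) := by
  have h := intervalIntegrable_betaKernel (a := 1 - γ) (b := 2 * H) (by linarith) (by linarith)
  have := (continuousOn_primitive_interval' h Set.right_mem_uIcc).neg
  rw [Set.uIcc_of_le zero_le_one] at this
  refine this.congr fun z _ => ?_
  exact intervalIntegral.integral_symm _ _

lemma continuousOn_outerPrimitive {H γ : ℝ} (hH₁ : 0 < H) (hH₂ : H < 1) (hγ₁ : H < γ)
    (hγ₂ : γ < 1) : ContinuousOn (outerPrimitive H γ) (Set.Icc 0 1) := by
  have h := intervalIntegrable_betaKernel (a := 1 + γ - 2 * H) (b := 2 * H)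
    (by linarith) (by linarith)
  have h2 := continuousOn_primitive_interval' h Set.left_mem_uIcc
  rw [Set.uIcc_of_le zero_le_one] at h2
  have h3 : Continuous fun z : ℝ => z ^ (2 * (γ - H)) :=
    Real.continuous_rpow_const (by linarith)
  exact ((h3.continuousOn.mul (continuousOn_betaTail hH₁ hγ₂)).add h2).div_const _

lemma hasDerivAt_outerPrimitive {H γ : ℝ} (hH₁ : 0 < H) (hH₂ : H < 1) (hγ₁ : H < γ)
    (hγ₂ : γ < 1) {z : ℝ} (h0 : 0 < z) (h1 : z < 1) :
    HasDerivAt (outerPrimitive H γ) (z ^ (2 * (γ - H) - 1) * betaTail H γ z) z := by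
  have hz : z ∈ Set.Icc (0:ℝ) 1 := ⟨h0.le, h1.le⟩
  have hG : HasDerivAt (betaTail H γ) (-betaKernel (1 - γ) (2 * H) z) z :=
    integral_hasDerivAt_left
      (intervalIntegrable_betaKernel_of_mem (by linarith) (by linarith) hz (by simp))
      (measurable_betaKernel _ _).stronglyMeasurable.stronglyMeasurableAtFilter
      (continuousAt_betaKernel _ _ h0 h1)
  have hQ := integral_hasDerivAt_right
      (intervalIntegrable_betaKernel_of_mem (a := 1 + γ - 2 * H) (b := 2 * H) (x := 0)
        (by linarith) (by linarith) (by simp) hz)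
      (measurable_betaKernel _ _).stronglyMeasurable.stronglyMeasurableAtFilter
      (continuousAt_betaKernel _ _ h0 h1)
  have hp := Real.hasDerivAt_rpow_const (x := z) (p := 2 * (γ - H)) (Or.inl h0.ne')
  refine (((hp.mul hG).add hQ).div_const (2 * (γ - H))).congr_deriv ?_
  -- The two Beta integrands differ by the factor `z ^ (2 * (γ - H))`, so their terms cancel.
  have hk : betaKernel (1 + γ - 2 * H) (2 * H) z
      = z ^ (2 * (γ - H)) * betaKernel (1 - γ) (2 * H) z := by
    rw [betaKernel, betaKernel, ← mul_assoc, ← Real.rpow_add h0]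
    ring_nf
  have hc : γ - H ≠ 0 := (sub_pos.2 hγ₁).ne'
  rw [hk]
  field_simp
  ring

lemma outerPrimitive_zero {H γ : ℝ} (hγ₁ : H < γ) : outerPrimitive H γ 0 = 0 := by
  have hc : 2 * (γ - H) ≠ 0 := (mul_pos two_pos (sub_pos.2 hγ₁)).ne'
  simp [outerPrimitive, Real.zero_rpow hc]

lemma outerPrimitive_one {H γ : ℝ} (hH₁ : 0 < H) (hH₂ : H < 1) (hγ₁ : H < γ) :
    outerPrimitive H γ 1 = Beta (2 * H) (1 + γ - 2 * H) / (2 * (γ - H)) := by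
  rw [outerPrimitive, integral_betaKernel (by linarith) (by linarith)]
  simp [betaTail]

/-- The substitution `v = T - (T - u) w` in the inner integral. -/
lemma inner_integral_eq_s15 {H γ T t u : ℝ} (hut : u ≤ t) (htT : t < T) :
    ∫ v in u..t, (T - v) ^ (-γ) * (v - u) ^ (2 * H - 1)
      = (T - u) ^ (2 * H - γ) * betaTail H γ ((T - t) / (T - u)) := by
  have hx : 0 < T - u := by linarith
  have h := intervalIntegral.integral_comp_sub_mul
    (fun v => (T - v) ^ (-γ) * (v - u) ^ (2 * H - 1)) (a := (T - t) / (T - u)) (b := 1) hx.ne' T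
  have e1 : T - (T - u) * 1 = u := by ring
  have e2 : T - (T - u) * ((T - t) / (T - u)) = t := by field_simp; ring
  rw [e1, e2, smul_eq_mul, inv_mul_eq_div, eq_div_iff hx.ne'] at h
  rw [← h, betaTail, ← intervalIntegral.integral_mul_const,
    ← intervalIntegral.integral_const_mul]
  refine intervalIntegral.integral_congr fun w hw => ?_
  have hz0 : 0 < (T - t) / (T - u) := div_pos (by linarith) hx
  have hz1 : (T - t) / (T - u) ≤ 1 := (div_le_one hx).2 (by linarith)
  rw [Set.uIcc_of_le hz1] at hw
  have hw0 : 0 ≤ w := hz0.le.trans hw.1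
  have hw1 : 0 ≤ 1 - w := sub_nonneg.2 hw.2
  have e3 : T - (T - (T - u) * w) = (T - u) * w := by ring
  have e4 : T - (T - u) * w - u = (T - u) * (1 - w) := by ring
  have e5 : (T - u) ^ (2 * H - γ) = (T - u) ^ (-γ) * (T - u) ^ (2 * H - 1) * (T - u) := by
    rw [← Real.rpow_add hx, ← Real.rpow_add_one hx.ne']
    ring_nf
  have e6 : 1 - γ - 1 = -γ := by ring
  simp only [betaKernel, e3, e4, e5, e6, Real.mul_rpow hx.le hw0, Real.mul_rpow hx.le hw1]
  ring

lemma scaled_integral_eq {H γ T t : ℝ} (hH₁ : 0 < H) (hH₂ : H < 1) (hγ₁ : H < γ) (hγ₂ : γ < 1)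
    (ht : 0 < t) (htT : t < T) :
    (T - t) ^ (2 * (γ - H)) * ∫ u in (0:ℝ)..t, (T - u) ^ (-γ - 1)
        * ∫ v in u..t, (T - v) ^ (-γ) * (v - u) ^ (2 * H - 1)
      = outerPrimitive H γ 1 - outerPrimitive H γ ((T - t) / T) := by
  have hε : 0 < T - t := sub_pos.2 htT
  have hmaps : Set.MapsTo (fun u => (T - t) / (T - u)) (Set.Icc 0 t) (Set.Icc (0:ℝ) 1) := by
    intro u hu
    have hx : 0 < T - u := by linarith [hu.2]
    exact ⟨(div_pos hε hx).le, (div_le_one hx).2 (by linarith [hu.2])⟩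
  have hzc : ContinuousOn (fun u => (T - t) / (T - u)) (Set.Icc 0 t) :=
    ContinuousOn.div (by fun_prop) (by fun_prop) fun u hu => by linarith [hu.2]
  -- The integrand, written as the derivative of `u ↦ P((T - t) / (T - u))`.
  have hrew : (T - t) ^ (2 * (γ - H)) * ∫ u in (0:ℝ)..t, (T - u) ^ (-γ - 1)
        * ∫ v in u..t, (T - v) ^ (-γ) * (v - u) ^ (2 * H - 1)
      = ∫ u in (0:ℝ)..t, (((T - t) / (T - u)) ^ (2 * (γ - H) - 1)
          * betaTail H γ ((T - t) / (T - u))) * ((T - t) / (T - u) ^ 2) := by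
    rw [← intervalIntegral.integral_const_mul]
    refine intervalIntegral.integral_congr fun u hu => ?_
    rw [Set.uIcc_of_le ht.le] at hu
    have hx : 0 < T - u := by linarith [hu.2]
    simp only [inner_integral_eq_s15 hu.2 htT]
    have e1 : (T - u) ^ (-γ - 1) * (T - u) ^ (2 * H - γ)
        = ((T - u) ^ (2 * (γ - H) - 1))⁻¹ / (T - u) ^ 2 := by
      rw [← Real.rpow_neg hx.le, ← Real.rpow_natCast, ← Real.rpow_sub hx, ← Real.rpow_add hx]
      push_cast
      ring_nf
    have e2 : (T - t) ^ (2 * (γ - H)) = (T - t) ^ (2 * (γ - H) - 1) * (T - t) := by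
      rw [← Real.rpow_add_one hε.ne']
      ring_nf
    rw [Real.div_rpow hε.le hx.le, ← mul_assoc ((T - u) ^ (-γ - 1)), e1, e2]
    ring
  have hd : ∀ u ∈ Set.Ioo 0 t, HasDerivAt (fun u => outerPrimitive H γ ((T - t) / (T - u)))
      ((((T - t) / (T - u)) ^ (2 * (γ - H) - 1)
          * betaTail H γ ((T - t) / (T - u))) * ((T - t) / (T - u) ^ 2)) u := by
    intro u hu
    have hx : 0 < T - u := by linarith [hu.2]
    have hz : HasDerivAt (fun u => (T - t) / (T - u)) ((T - t) / (T - u) ^ 2) u := by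
      have := (hasDerivAt_const u (T - t)).div ((hasDerivAt_id u).const_sub T) hx.ne'
      refine this.congr_deriv ?_
      simp
    exact (hasDerivAt_outerPrimitive hH₁ hH₂ hγ₁ hγ₂ (div_pos hε hx)
      ((div_lt_one hx).2 (by linarith [hu.2]))).comp u hz
  have hint : ContinuousOn (fun u => (((T - t) / (T - u)) ^ (2 * (γ - H) - 1)
      * betaTail H γ ((T - t) / (T - u))) * ((T - t) / (T - u) ^ 2)) (Set.Icc 0 t) := by
    refine ((hzc.rpow_const fun u hu => Or.inl ?_).mul
      ((continuousOn_betaTail hH₁ hγ₂).comp hzc hmaps)).mul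
      (ContinuousOn.div (by fun_prop) (by fun_prop) fun u hu => ?_)
    · exact (div_pos hε (by linarith [hu.2])).ne'
    · exact pow_ne_zero _ (by linarith [hu.2])
  rw [hrew, integral_eq_sub_of_hasDerivAt_of_le ht.le
    ((continuousOn_outerPrimitive hH₁ hH₂ hγ₁ hγ₂).comp hzc hmaps) hd
    (hint.intervalIntegrable_of_Icc ht.le)]
  simp [div_self hε.ne']

theorem stmt_15 (H γ T : ℝ) (hH₁ : 0 < H) (hH₂ : H < 1) (hγ₁ : H < γ) (hγ₂ : γ < 1)
    (hT : 0 < T) :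
    Filter.Tendsto
      (fun t : ℝ => (T - t) ^ (2*(γ - H))
        * ∫ u in (0:ℝ)..t, (T - u) ^ (-γ - 1)
            * ∫ v in u..t, (T - v) ^ (-γ) * (v - u) ^ (2*H - 1))
      (nhdsWithin T (Set.Iio T)) (nhds (Beta (2*H) (1 + γ - 2*H) / (2*(γ - H)))) := by
  have hev : ∀ᶠ t in nhdsWithin T (Set.Iio T), t ∈ Set.Ioo 0 T := Ioo_mem_nhdsLT hT
  have hz : Tendsto (fun t : ℝ => (T - t) / T) (nhdsWithin T (Set.Iio T))
      (nhdsWithin 0 (Set.Icc 0 1)) := by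
    refine tendsto_nhdsWithin_iff.2 ⟨?_, ?_⟩
    · have : Tendsto (fun t : ℝ => (T - t) / T) (nhds T) (nhds ((T - T) / T)) :=
        Continuous.tendsto (by fun_prop) T
      rw [sub_self, zero_div] at this
      exact this.mono_left nhdsWithin_le_nhds
    · filter_upwards [hev] with t ht
      exact ⟨(div_pos (sub_pos.2 ht.2) hT).le, (div_le_one hT).2 (by linarith [ht.1])⟩
  have hP : Tendsto (outerPrimitive H γ) (nhdsWithin 0 (Set.Icc 0 1)) (nhds 0) := by
    have := continuousOn_outerPrimitive hH₁ hH₂ hγ₁ hγ₂ 0 (by simp)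
    rwa [ContinuousWithinAt, outerPrimitive_zero hγ₁] at this
  have hlim := (hP.comp hz).const_sub (outerPrimitive H γ 1)
  rw [sub_zero, outerPrimitive_one hH₁ hH₂ hγ₁] at hlim
  refine hlim.congr' ?_
  filter_upwards [hev] with t ht
  rw [scaled_integral_eq hH₁ hH₂ hγ₁ hγ₂ ht.1 ht.2, outerPrimitive_one hH₁ hH₂ hγ₁]
  rfl
end

section
/- Let H ∈ (0, 1), α ∈ (0, H), and T > 0. For 0 ≤ s ≤ t < T define J₁(s,t) = 2H ∫_s^t (T−u)^{−α−1} ( ∫_u^t (T−v)^{−α} (v−u)^{2H−1} dv ) du, J₂(s,t) = (T−t)^{1−α} ∫_s^t (T−u)^{−α−1} (t−u)^{2H−1} du, and J₃(s,t) = (T−s)^{−α} ∫_s^t (T−v)^{−α} (v−s)^{2H−1} dv. Then for all 0 ≤ s ≤ t < T: J₁(s,t) + J₂(s,t) + J₃(s,t) ≤ [ (H·B(1−α, 2H) + 1/2)/(H−α) + B(1−α, 2H−α) ] · (t−s)^{2(H−α)}. In particular, the bounding constant does not depend on T. -/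
/-!
The dependence on `T` is removed pointwise: for negative exponents, `T - v ≥ t - v` bounds the
powers of `T - v` by powers of `t - v`, and in the third term `T - s ≥ v - s` moves the factor
`(T - s) ^ (-α)` inside the integral. What remains are Beta integrals over `[u, t]` or `[s, t]`
(`integral_sub_rpow_mul_sub_rpow`) and integrals of the power `(t - u) ^ (2 (H - α) - 1)`
(`integral_sub_rpow`). In the second term, `(T - t) ^ (1 - α) ≤ (T - u) ^ (1 - α)` is used first,
leaving `(T - u) ^ (-2 α)`.
-/

open MeasureTheory intervalIntegral

lemma Beta_pos {a b : ℝ} (ha : 0 < a) (hb : 0 < b) : 0 < Beta a b :=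
  ProbabilityTheory.beta_pos ha hb

/-- The Euler integral on `[s, t]`, obtained from the complex Beta integral. -/
lemma integral_sub_rpow_mul_sub_rpow {a b s t : ℝ} (ha : 0 < a) (hb : 0 < b) (hst : s < t) :
    ∫ x in s..t, (t - x) ^ (a - 1) * (x - s) ^ (b - 1) = Beta a b * (t - s) ^ (a + b - 1) := by
  have hc : 0 < t - s := sub_pos.2 hst
  have h1 : ∫ x in s..t, (t - x) ^ (a - 1) * (x - s) ^ (b - 1)
      = ∫ x in (0 : ℝ)..(t - s), x ^ (b - 1) * ((t - s) - x) ^ (a - 1) := by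
    have := intervalIntegral.integral_comp_sub_right (a := s) (b := t)
      (fun x : ℝ => x ^ (b - 1) * ((t - s) - x) ^ (a - 1)) s
    rw [sub_self] at this
    rw [← this]
    congr 1 with x
    rw [mul_comm, sub_sub_sub_cancel_right]
  have h2 := Complex.betaIntegral_scaled (b : ℂ) (a : ℂ) hc
  rw [Complex.betaIntegral_eq_Gamma_mul_div _ _ (by simpa) (by simpa)] at h2
  have h3 : ∫ x in (0 : ℝ)..(t - s), (x : ℂ) ^ ((b : ℂ) - 1) * (((t - s : ℝ) : ℂ) - x) ^ ((a : ℂ) - 1)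
      = ((∫ x in (0 : ℝ)..(t - s), x ^ (b - 1) * ((t - s) - x) ^ (a - 1) : ℝ) : ℂ) := by
    rw [← intervalIntegral.integral_ofReal]
    refine intervalIntegral.integral_congr fun x hx => ?_
    rw [Set.uIcc_of_le hc.le] at hx
    have hx2 : 0 ≤ t - s - x := sub_nonneg.2 hx.2
    simp only [Complex.ofReal_mul, Complex.ofReal_cpow hx.1, Complex.ofReal_cpow hx2]
    push_cast
    rfl
  rw [h3, ← Complex.ofReal_add, Complex.Gamma_ofReal, Complex.Gamma_ofReal, Complex.Gamma_ofReal,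
    ← Complex.ofReal_one, ← Complex.ofReal_sub, ← Complex.ofReal_cpow hc.le] at h2
  rw [h1, Beta, add_comm a b, mul_comm (Real.Gamma a), mul_comm]
  exact_mod_cast h2

lemma intervalIntegrable_sub_rpow_mul_sub_rpow {a b s t : ℝ} (ha : 0 < a) (hb : 0 < b)
    (hst : s < t) :
    IntervalIntegrable (fun x => (t - x) ^ (a - 1) * (x - s) ^ (b - 1)) volume s t := by
  -- The integral is nonzero, while the integral of a non-integrable function is `0`.
  apply intervalIntegral.intervalIntegrable_of_integral_ne_zero
  rw [integral_sub_rpow_mul_sub_rpow ha hb hst]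
  exact (mul_pos (Beta_pos ha hb) (Real.rpow_pos_of_pos (sub_pos.2 hst) _)).ne'

lemma integral_sub_rpow {r s t : ℝ} (hr : 0 < r) :
    ∫ x in s..t, (t - x) ^ (r - 1) = (t - s) ^ r / r := by
  rw [intervalIntegral.integral_comp_sub_left (fun x : ℝ => x ^ (r - 1)), sub_self,
    integral_rpow (Or.inl (by linarith))]
  simp [hr.ne']

lemma intervalIntegrable_sub_rpow {r s t : ℝ} (hr : 0 < r) :
    IntervalIntegrable (fun x => (t - x) ^ (r - 1)) volume s t := by
  have := (intervalIntegral.intervalIntegrable_rpow' (a := t - s) (b := 0) (r := r - 1)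
    (by linarith)).comp_sub_left t
  simpa using this

/-- Only the dominating function has to be integrable, since both functions are nonnegative. -/
lemma integral_le_of_nonneg_of_le {f g : ℝ → ℝ} {s t : ℝ} (hst : s ≤ t)
    (hf : ∀ x ∈ Set.Ioo s t, 0 ≤ f x) (hfg : ∀ x ∈ Set.Ioo s t, f x ≤ g x)
    (hg : IntervalIntegrable g volume s t) : ∫ x in s..t, f x ≤ ∫ x in s..t, g x := by
  rw [intervalIntegral.integral_of_le hst, intervalIntegral.integral_of_le hst,
    integral_Ioc_eq_integral_Ioo, integral_Ioc_eq_integral_Ioo]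
  refine integral_mono_of_nonneg ?_ ?_ ?_
  · exact (ae_restrict_iff' measurableSet_Ioo).2 (Filter.Eventually.of_forall hf)
  · exact ((intervalIntegrable_iff_integrableOn_Ioo_of_le hst).1 hg)
  · exact (ae_restrict_iff' measurableSet_Ioo).2 (Filter.Eventually.of_forall hfg)

theorem stmt_18 (H α T : ℝ) (hH₁ : 0 < H) (hH₂ : H < 1) (hα₁ : 0 < α) (hα₂ : α < H)
    (hT : 0 < T) :
    ∀ s t : ℝ, 0 ≤ s → s ≤ t → t < T →
      (2*H * ∫ u in s..t, (T - u) ^ (-α - 1)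
          * ∫ v in u..t, (T - v) ^ (-α) * (v - u) ^ (2*H - 1))
        + (T - t) ^ (1 - α) * (∫ u in s..t, (T - u) ^ (-α - 1) * (t - u) ^ (2*H - 1))
        + (T - s) ^ (-α) * (∫ v in s..t, (T - v) ^ (-α) * (v - s) ^ (2*H - 1))
      ≤ ((H * Beta (1 - α) (2*H) + 1/2) / (H - α) + Beta (1 - α) (2*H - α))
          * (t - s) ^ (2*(H - α)) := by
  intro s t _ hst htT
  rcases hst.eq_or_lt with rfl | hlt
  · have h0 : (2 * (H - α)) ≠ 0 := by linarith
    simp [Real.zero_rpow h0]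
  have hr : 0 < 2 * (H - α) := by linarith
  have h1α : 0 < 1 - α := by linarith
  have hne : H - α ≠ 0 := by linarith
  set r := 2 * (H - α) with hrdef
  have hI : ∫ u in s..t, (t - u) ^ (r - 1) = (t - s) ^ r / r := integral_sub_rpow hr
  have hInt : IntervalIntegrable (fun u => (t - u) ^ (r - 1)) volume s t :=
    intervalIntegrable_sub_rpow hr
  -- The inner integral of the first term is at most `B(1 - α, 2H) (t - u) ^ (2H - α)`.
  have hinner : ∀ u, u < t → ∫ v in u..t, (T - v) ^ (-α) * (v - u) ^ (2*H - 1)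
      ≤ Beta (1 - α) (2*H) * (t - u) ^ (2*H - α) := by
    intro u hu
    have e : 2*H - α = (1 - α) + 2*H - 1 := by ring
    rw [e, ← integral_sub_rpow_mul_sub_rpow h1α (by linarith) hu]
    refine integral_le_of_nonneg_of_le hu.le (fun v hv => ?_) (fun v hv => ?_)
      (intervalIntegrable_sub_rpow_mul_sub_rpow h1α (by linarith) hu)
    · exact mul_nonneg (Real.rpow_nonneg (by linarith [hv.2]) _)
        (Real.rpow_nonneg (by linarith [hv.1]) _)
    · rw [show 1 - α - 1 = -α by ring]
      exact mul_le_mul_of_nonneg_right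
        (Real.rpow_le_rpow_of_nonpos (by linarith [hv.2]) (by linarith) (by linarith))
        (Real.rpow_nonneg (by linarith [hv.1]) _)
  have hJ1 : ∫ u in s..t, (T - u) ^ (-α - 1)
          * ∫ v in u..t, (T - v) ^ (-α) * (v - u) ^ (2*H - 1)
      ≤ Beta (1 - α) (2*H) * ((t - s) ^ r / r) := by
    rw [← hI, ← intervalIntegral.integral_const_mul]
    refine integral_le_of_nonneg_of_le hst (fun u hu => ?_) (fun u hu => ?_)
      (hInt.const_mul _)
    · refine mul_nonneg (Real.rpow_nonneg (by linarith [hu.2]) _)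
        (intervalIntegral.integral_nonneg hu.2.le fun v hv => ?_)
      exact mul_nonneg (Real.rpow_nonneg (by linarith [hv.2]) _)
        (Real.rpow_nonneg (by linarith [hv.1]) _)
    · have htu : 0 < t - u := by linarith [hu.2]
      calc _ ≤ (T - u) ^ (-α - 1) * (Beta (1 - α) (2*H) * (t - u) ^ (2*H - α)) :=
            mul_le_mul_of_nonneg_left (hinner u hu.2) (Real.rpow_nonneg (by linarith) _)
        _ ≤ (t - u) ^ (-α - 1) * (Beta (1 - α) (2*H) * (t - u) ^ (2*H - α)) :=
            mul_le_mul_of_nonneg_right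
              (Real.rpow_le_rpow_of_nonpos htu (by linarith) (by linarith))
              (mul_nonneg (Beta_pos h1α (by linarith)).le (Real.rpow_nonneg htu.le _))
        _ = Beta (1 - α) (2*H) * (t - u) ^ (r - 1) := by
            rw [show r - 1 = (-α - 1) + (2*H - α) by rw [hrdef]; ring, Real.rpow_add htu]
            ring
  have hJ2 : (T - t) ^ (1 - α) * (∫ u in s..t, (T - u) ^ (-α - 1) * (t - u) ^ (2*H - 1))
      ≤ (t - s) ^ r / r := by
    rw [← hI, ← intervalIntegral.integral_const_mul]
    refine integral_le_of_nonneg_of_le hst (fun u hu => ?_) (fun u hu => ?_) hInt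
    · exact mul_nonneg (Real.rpow_nonneg (by linarith) _)
        (mul_nonneg (Real.rpow_nonneg (by linarith [hu.2]) _)
          (Real.rpow_nonneg (by linarith [hu.2]) _))
    · have htu : 0 < t - u := by linarith [hu.2]
      have hTu : 0 < T - u := by linarith
      calc _ ≤ (T - u) ^ (1 - α) * ((T - u) ^ (-α - 1) * (t - u) ^ (2*H - 1)) :=
            mul_le_mul_of_nonneg_right
              (Real.rpow_le_rpow (by linarith) (by linarith [hu.2]) h1α.le) (by positivity)
        _ = (T - u) ^ (-(2*α)) * (t - u) ^ (2*H - 1) := by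
            rw [← mul_assoc, ← Real.rpow_add hTu]
            ring_nf
        _ ≤ (t - u) ^ (-(2*α)) * (t - u) ^ (2*H - 1) :=
            mul_le_mul_of_nonneg_right
              (Real.rpow_le_rpow_of_nonpos htu (by linarith) (by linarith)) (by positivity)
        _ = (t - u) ^ (r - 1) := by
            rw [← Real.rpow_add htu, hrdef]
            ring_nf
  have hJ3 : (T - s) ^ (-α) * (∫ v in s..t, (T - v) ^ (-α) * (v - s) ^ (2*H - 1))
      ≤ Beta (1 - α) (2*H - α) * (t - s) ^ r := by
    have h2 : 0 < 2*H - α := by linarith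
    rw [show r = (1 - α) + (2*H - α) - 1 by rw [hrdef]; ring,
      ← integral_sub_rpow_mul_sub_rpow h1α h2 hlt, ← intervalIntegral.integral_const_mul]
    refine integral_le_of_nonneg_of_le hst (fun v hv => ?_) (fun v hv => ?_)
      (intervalIntegrable_sub_rpow_mul_sub_rpow h1α h2 hlt)
    · exact mul_nonneg (Real.rpow_nonneg (by linarith) _)
        (mul_nonneg (Real.rpow_nonneg (by linarith [hv.2]) _)
          (Real.rpow_nonneg (by linarith [hv.1]) _))
    · have hvs : 0 < v - s := by linarith [hv.1]
      have htv : 0 < t - v := by linarith [hv.2]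
      have hTv : 0 < T - v := by linarith
      calc _ ≤ (v - s) ^ (-α) * ((t - v) ^ (-α) * (v - s) ^ (2*H - 1)) := by
            refine mul_le_mul
              (Real.rpow_le_rpow_of_nonpos hvs (by linarith) (by linarith))
              (mul_le_mul_of_nonneg_right
                (Real.rpow_le_rpow_of_nonpos htv (by linarith) (by linarith)) (by positivity))
              (by positivity) (by positivity)
        _ = (t - v) ^ (1 - α - 1) * (v - s) ^ (2*H - α - 1) := by
            rw [show 2*H - α - 1 = -α + (2*H - 1) by ring, Real.rpow_add hvs,
              show 1 - α - 1 = -α by ring]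
            ring
  calc _ ≤ 2*H * (Beta (1 - α) (2*H) * ((t - s) ^ r / r)) + (t - s) ^ r / r
        + Beta (1 - α) (2*H - α) * (t - s) ^ r :=
        add_le_add (add_le_add (mul_le_mul_of_nonneg_left hJ1 (by linarith)) hJ2) hJ3
    _ = _ := by
        generalize (t - s) ^ r = X
        rw [hrdef]
        field_simp
end

section
/- Let H ∈ (0, 1/2) ∪ (1/2, 1), α ∈ (0, 1), and T > 0. For 0 ≤ s ≤ t < T the following identity holds: α ∬_{[s,t]²} (T−u)^{−α−1} (T−v)^{−α} |v−u|^{2H−1} sgn(v−u) du dv + (T−t)^{−α} ∫_s^t (T−v)^{−α} (t−v)^{2H−1} dv = 2H ∫_s^t (T−u)^{−α−1} ( ∫_u^t (T−v)^{−α} (v−u)^{2H−1} dv ) du + (T−t)^{1−α} ∫_s^t (T−u)^{−α−1} (t−u)^{2H−1} du. -/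
open MeasureTheory intervalIntegral

/-!
Write `f u = (T - u) ^ (-α - 1)` and `g v = (T - v) ^ (-α)`, so that `g' = α f` and
`(T - u) f u = g u`. Splitting the square along the diagonal and exchanging the order of integration
on the lower triangle (`triangle_swap`) turns the double integral into the integral over `u < v` of
`(f u * g v - g u * f v) * (v - u) ^ (2H - 1)`, which equals `- f u * f v * (v - u) ^ (2H)`.
Multiplying by `α` and integrating by parts in `v` (`inner_identity`) yields the iterated integral
on the right and the boundary term `- g t * ∫ f u * (t - u) ^ (2H)`. The remaining single integrals
match because `g u - f u * (t - u) = (T - t) * f u`.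
-/

/-- Fubini on the triangle `s < u < v ≤ t` for the kernel `a u * b v * (v - u) ^ p`, together with
the integrability of both outer integrands. The kernel is a convolution integrand of truncated
functions, which is where its integrability over the plane comes from. -/
lemma triangle_swap {s t p : ℝ} (hst : s ≤ t) (hp : -1 < p) {a b : ℝ → ℝ}
    (ha : ContinuousOn a (Set.Icc s t)) (hb : ContinuousOn b (Set.Icc s t)) :
    IntervalIntegrable (fun u => a u * ∫ v in u..t, b v * (v - u) ^ p) volume s t ∧
    IntervalIntegrable (fun v => b v * ∫ u in s..v, a u * (v - u) ^ p) volume s t ∧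
    (∫ v in s..t, b v * ∫ u in s..v, a u * (v - u) ^ p)
      = ∫ u in s..t, a u * ∫ v in u..t, b v * (v - u) ^ p := by
  set A : ℝ → ℝ := (Set.Ioc s t).indicator a with hA
  set B : ℝ → ℝ := (Set.Ioc s t).indicator b with hB
  set k : ℝ → ℝ := (Set.Ioc 0 (t - s)).indicator (fun x => x ^ p) with hk
  have hAi : Integrable A := by
    rw [hA, integrable_indicator_iff measurableSet_Ioc]
    exact ha.integrableOn_Icc.mono_set Set.Ioc_subset_Icc_self
  have hBi : Integrable B := by
    rw [hB, integrable_indicator_iff measurableSet_Ioc]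
    exact hb.integrableOn_Icc.mono_set Set.Ioc_subset_Icc_self
  have hki : Integrable k := by
    rw [hk, integrable_indicator_iff measurableSet_Ioc]
    exact (intervalIntegrable_iff_integrableOn_Ioc_of_le (sub_nonneg.2 hst)).1
      (intervalIntegrable_rpow' hp)
  have h1 : Integrable (fun z : ℝ × ℝ => A z.2 * k (z.1 - z.2)) (volume.prod volume) := by
    simpa using hAi.convolution_integrand (ContinuousLinearMap.mul ℝ ℝ) hki
  obtain ⟨M, hM⟩ := isCompact_Icc.exists_bound_of_continuousOn hb
  have hBM : ∀ x, ‖B x‖ ≤ max M 0 := by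
    intro x
    by_cases hx : x ∈ Set.Ioc s t
    · rw [hB, Set.indicator_of_mem hx]
      exact (hM x (Set.Ioc_subset_Icc_self hx)).trans (le_max_left _ _)
    · rw [hB, Set.indicator_of_notMem hx]; simp
  have h2 : Integrable (fun z : ℝ × ℝ => B z.1 * (A z.2 * k (z.1 - z.2)))
      (volume.prod volume) :=
    h1.bdd_mul hBi.aestronglyMeasurable.comp_fst (Filter.Eventually.of_forall fun z => hBM z.1)
  -- The two sections of the truncated kernel are the inner integrals of the statement.
  have e1 : ∀ v, (∫ u, B v * (A u * k (v - u)))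
      = (Set.Ioc s t).indicator (fun v => b v * ∫ u in s..v, a u * (v - u) ^ p) v := by
    intro v
    by_cases hv : v ∈ Set.Ioc s t
    · rw [Set.indicator_of_mem hv, MeasureTheory.integral_const_mul, hB, Set.indicator_of_mem hv,
        integral_of_le hv.1.le, integral_Ioc_eq_integral_Ioo,
        ← MeasureTheory.integral_indicator measurableSet_Ioo]
      congr 2
      ext u
      by_cases hu : u ∈ Set.Ioo s v
      · rw [Set.indicator_of_mem hu, hA, hk,
          Set.indicator_of_mem (show u ∈ Set.Ioc s t from ⟨hu.1, hu.2.le.trans hv.2⟩),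
          Set.indicator_of_mem (show v - u ∈ Set.Ioc 0 (t - s) from
            ⟨sub_pos.2 hu.2, by linarith [hu.1, hv.2]⟩)]
      · rw [Set.indicator_of_notMem hu]
        by_cases hu' : u ∈ Set.Ioc s t
        · rw [hk, Set.indicator_of_notMem, mul_zero]
          exact fun h => hu ⟨hu'.1, sub_pos.1 h.1⟩
        · rw [hA, Set.indicator_of_notMem hu', zero_mul]
    · rw [Set.indicator_of_notMem hv]
      simp [hB, Set.indicator_of_notMem hv]
  have e2 : ∀ u, (∫ v, B v * (A u * k (v - u)))
      = (Set.Ioc s t).indicator (fun u => a u * ∫ v in u..t, b v * (v - u) ^ p) u := by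
    intro u
    by_cases hu : u ∈ Set.Ioc s t
    · have : ∀ v, B v * (A u * k (v - u)) = A u * (B v * k (v - u)) := fun v => by ring
      simp only [this]
      rw [Set.indicator_of_mem hu, MeasureTheory.integral_const_mul, hA, Set.indicator_of_mem hu,
        integral_of_le hu.2, ← MeasureTheory.integral_indicator measurableSet_Ioc]
      congr 2
      ext v
      by_cases hv : v ∈ Set.Ioc u t
      · rw [Set.indicator_of_mem hv, hB, hk,
          Set.indicator_of_mem (show v ∈ Set.Ioc s t from ⟨hu.1.trans hv.1, hv.2⟩),
          Set.indicator_of_mem (show v - u ∈ Set.Ioc 0 (t - s) from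
            ⟨sub_pos.2 hv.1, by linarith [hu.1, hv.2]⟩)]
      · rw [Set.indicator_of_notMem hv]
        by_cases hv' : v ∈ Set.Ioc s t
        · rw [hk, Set.indicator_of_notMem, mul_zero]
          exact fun h => hv ⟨sub_pos.1 h.1, hv'.2⟩
        · rw [hB, Set.indicator_of_notMem hv', zero_mul]
    · rw [Set.indicator_of_notMem hu]
      simp [hA, Set.indicator_of_notMem hu]
  have i1 := h2.integral_prod_left
  have i2 := h2.integral_prod_right
  have sw := integral_integral_swap (f := fun v u => B v * (A u * k (v - u))) h2
  simp only [e1] at i1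
  simp only [e2] at i2
  simp only [e1, e2] at sw
  rw [intervalIntegrable_iff_integrableOn_Ioc_of_le hst,
    intervalIntegrable_iff_integrableOn_Ioc_of_le hst, integral_of_le hst, integral_of_le hst]
  refine ⟨(integrable_indicator_iff measurableSet_Ioc).1 i2,
    (integrable_indicator_iff measurableSet_Ioc).1 i1, ?_⟩
  rwa [MeasureTheory.integral_indicator measurableSet_Ioc,
    MeasureTheory.integral_indicator measurableSet_Ioc] at sw

lemma integrable_right {u t p : ℝ} (hp : -1 < p) {b : ℝ → ℝ} (hct : u ≤ t)
    (hb : ContinuousOn b (Set.Icc u t)) :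
    IntervalIntegrable (fun v => b v * (v - u) ^ p) volume u t := by
  have h : IntervalIntegrable (fun v => (v - u) ^ p) volume u t := by
    have := (intervalIntegrable_rpow' (a := 0) (b := t - u) hp).comp_sub_right u
    simpa using this
  exact h.continuousOn_mul (by rwa [Set.uIcc_of_le hct])

lemma integrable_left {s u p : ℝ} (hp : -1 < p) {b : ℝ → ℝ} (hsu : s ≤ u)
    (hb : ContinuousOn b (Set.Icc s u)) :
    IntervalIntegrable (fun v => b v * (u - v) ^ p) volume s u := by
  have h : IntervalIntegrable (fun v => (u - v) ^ p) volume s u := by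
    have := (intervalIntegrable_rpow' (a := u - s) (b := 0) hp).comp_sub_left u
    simpa using this
  exact h.continuousOn_mul (by rwa [Set.uIcc_of_le hsu])

lemma continuousOn_weight {T t s c : ℝ} (ht : t < T) :
    ContinuousOn (fun u => (T - u) ^ c) (Set.Icc s t) := by
  refine ContinuousOn.rpow_const (by fun_prop) fun x hx => Or.inl ?_
  have := hx.2
  exact (sub_pos.2 (by linarith)).ne'

/-- `(T - u) f u = g u` in the notation of the header. -/
lemma weight_mul {T u α : ℝ} (hu : u < T) : (T - u) ^ (-α) = (T - u) * (T - u) ^ (-α - 1) := by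
  rw [Real.rpow_sub_one (sub_pos.2 hu).ne']
  field_simp [(sub_pos.2 hu).ne']

/-- Combining the two triangles pointwise in `u` and integrating by parts in `v`. -/
lemma inner_identity {T t u α p : ℝ} (hp : -1 < p) (hut : u ≤ t) (ht : t < T) :
    α * ((T - u) ^ (-α - 1) * (∫ v in u..t, (T - v) ^ (-α) * (v - u) ^ p)
        - (T - u) ^ (-α) * ∫ v in u..t, (T - v) ^ (-α - 1) * (v - u) ^ p)
      = (p + 1) * ((T - u) ^ (-α - 1) * ∫ v in u..t, (T - v) ^ (-α) * (v - u) ^ p)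
        - (T - t) ^ (-α) * ((T - u) ^ (-α - 1) * (t - u) ^ (p + 1)) := by
  have hp1 : 0 < p + 1 := by linarith
  have hg := integrable_right hp hut (continuousOn_weight (c := -α) (s := u) ht)
  have hf := integrable_right hp hut (continuousOn_weight (c := -α - 1) (s := u) ht)
  have parts : (∫ v in u..t, (T - v) ^ (-α) * ((p + 1) * (v - u) ^ p))
      = (T - t) ^ (-α) * (t - u) ^ (p + 1) - (T - u) ^ (-α) * (u - u) ^ (p + 1)
        - ∫ v in u..t, (α * (T - v) ^ (-α - 1)) * (v - u) ^ (p + 1) := by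
    apply integral_mul_deriv_eq_deriv_mul_of_hasDerivAt
    · rw [Set.uIcc_of_le hut]; exact continuousOn_weight ht
    · exact (Continuous.rpow_const (by fun_prop) fun _ => Or.inr hp1.le).continuousOn
    · intro x hx
      rw [min_eq_left hut, max_eq_right hut] at hx
      have hx0 : T - x ≠ 0 := (sub_pos.2 (hx.2.trans ht)).ne'
      have := ((hasDerivAt_id x).const_sub T).rpow_const (p := -α) (Or.inl hx0)
      simpa using this
    · intro x hx
      rw [min_eq_left hut, max_eq_right hut] at hx
      have hx0 : x - u ≠ 0 := (sub_pos.2 hx.1).ne'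
      have := ((hasDerivAt_id x).sub_const u).rpow_const (p := p + 1) (Or.inl hx0)
      simpa using this
    · refine ContinuousOn.intervalIntegrable ?_
      rw [Set.uIcc_of_le hut]
      exact (continuousOn_weight ht).const_mul _
    · have := integrable_right hp hut (continuousOn_const (c := p + 1))
      exact this
  have comb : (T - u) ^ (-α - 1) * (∫ v in u..t, (T - v) ^ (-α) * (v - u) ^ p)
        - (T - u) ^ (-α) * (∫ v in u..t, (T - v) ^ (-α - 1) * (v - u) ^ p)
      = -((T - u) ^ (-α - 1) * ∫ v in u..t, (T - v) ^ (-α - 1) * (v - u) ^ (p + 1)) := by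
    rw [← intervalIntegral.integral_const_mul, ← intervalIntegral.integral_const_mul,
      ← intervalIntegral.integral_const_mul, ← intervalIntegral.integral_neg,
      ← intervalIntegral.integral_sub (hg.const_mul _) (hf.const_mul _)]
    refine integral_congr_ae (Filter.Eventually.of_forall fun v hv => ?_)
    rw [Set.uIoc_of_le hut] at hv
    rw [weight_mul (α := α) (hut.trans_lt ht), weight_mul (α := α) (hv.2.trans_lt ht),
      Real.rpow_add_one (sub_pos.2 hv.1).ne']
    ring
  rw [comb]
  have l1 : (∫ v in u..t, (T - v) ^ (-α) * ((p + 1) * (v - u) ^ p))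
      = (p + 1) * ∫ v in u..t, (T - v) ^ (-α) * (v - u) ^ p := by
    rw [← intervalIntegral.integral_const_mul]
    congr 1; ext v; ring
  have l2 : (∫ v in u..t, (α * (T - v) ^ (-α - 1)) * (v - u) ^ (p + 1))
      = α * ∫ v in u..t, (T - v) ^ (-α - 1) * (v - u) ^ (p + 1) := by
    rw [← intervalIntegral.integral_const_mul]
    congr 1; ext v; ring
  rw [l1, l2, sub_self, Real.zero_rpow hp1.ne'] at parts
  linear_combination -(T - u) ^ (-α - 1) * parts

/-- Splitting the inner integral over the square at the diagonal. -/
lemma split_diagonal {s t u T α p : ℝ} (hp : -1 < p) (hsu : s ≤ u) (hut : u ≤ t) (ht : t < T) :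
    (∫ v in s..t, (T - u) ^ (-α - 1) * (T - v) ^ (-α) * |v - u| ^ p * Real.sign (v - u))
      = (T - u) ^ (-α - 1) * (∫ v in u..t, (T - v) ^ (-α) * (v - u) ^ p)
        - (T - u) ^ (-α - 1) * ∫ v in s..u, (T - v) ^ (-α) * (u - v) ^ p := by
  set F : ℝ → ℝ := fun v =>
    (T - u) ^ (-α - 1) * (T - v) ^ (-α) * |v - u| ^ p * Real.sign (v - u) with hF
  have hr := (integrable_right hp hut
    (continuousOn_weight (c := -α) (s := u) ht)).const_mul ((T - u) ^ (-α - 1))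
  have hl := (integrable_left hp hsu
    (continuousOn_weight (c := -α) (s := s) (hut.trans_lt ht))).const_mul (-(T - u) ^ (-α - 1))
  have er : ∀ v ∈ Set.Ioo u t,
      (T - u) ^ (-α - 1) * ((T - v) ^ (-α) * (v - u) ^ p) = F v := by
    intro v hv
    have h := sub_pos.2 hv.1
    simp only [hF]
    rw [abs_of_pos h, Real.sign_of_pos h]
    ring
  have el : ∀ v ∈ Set.Ioo s u,
      -(T - u) ^ (-α - 1) * ((T - v) ^ (-α) * (u - v) ^ p) = F v := by
    intro v hv
    have h := sub_neg.2 hv.2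
    simp only [hF]
    rw [abs_of_neg h, Real.sign_of_neg h, neg_sub]
    ring
  have Ir : IntervalIntegrable F volume u t := by
    rw [intervalIntegrable_iff_integrableOn_Ioo_of_le hut] at hr ⊢
    exact hr.congr_fun er measurableSet_Ioo
  have Il : IntervalIntegrable F volume s u := by
    rw [intervalIntegrable_iff_integrableOn_Ioo_of_le hsu] at hl ⊢
    exact hl.congr_fun el measurableSet_Ioo
  have vr : (∫ v in u..t, F v)
      = (T - u) ^ (-α - 1) * ∫ v in u..t, (T - v) ^ (-α) * (v - u) ^ p := by
    rw [← intervalIntegral.integral_const_mul, integral_of_le hut, integral_of_le hut,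
      integral_Ioc_eq_integral_Ioo, integral_Ioc_eq_integral_Ioo]
    exact (setIntegral_congr_fun measurableSet_Ioo er).symm
  have vl : (∫ v in s..u, F v)
      = -(T - u) ^ (-α - 1) * ∫ v in s..u, (T - v) ^ (-α) * (u - v) ^ p := by
    rw [← intervalIntegral.integral_const_mul, integral_of_le hsu, integral_of_le hsu,
      integral_Ioc_eq_integral_Ioo, integral_Ioc_eq_integral_Ioo]
    exact (setIntegral_congr_fun measurableSet_Ioo el).symm
  rw [← integral_add_adjacent_intervals Il Ir, vr, vl]
  ring

theorem stmt_19 (H α T : ℝ)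
    (hH : H ∈ Set.Ioo (0:ℝ) (1/2) ∪ Set.Ioo (1/2 : ℝ) 1)
    (hα₁ : 0 < α) (hα₂ : α < 1) (hT : 0 < T) :
    ∀ s t : ℝ, 0 ≤ s → s ≤ t → t < T →
      α * (∫ u in s..t, ∫ v in s..t,
            (T - u) ^ (-α - 1) * (T - v) ^ (-α)
              * |v - u| ^ (2*H - 1) * Real.sign (v - u))
        + (T - t) ^ (-α) * (∫ v in s..t, (T - v) ^ (-α) * (t - v) ^ (2*H - 1))
      = 2*H * (∫ u in s..t, (T - u) ^ (-α - 1)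
            * ∫ v in u..t, (T - v) ^ (-α) * (v - u) ^ (2*H - 1))
        + (T - t) ^ (1 - α) * (∫ u in s..t, (T - u) ^ (-α - 1) * (t - u) ^ (2*H - 1)) := by
  intro s t _ hst ht
  have hp : -1 < 2 * H - 1 := by
    rcases hH with h | h <;> linarith [h.1]
  have hH2 : 2 * H = (2 * H - 1) + 1 := by ring
  generalize hpdef : 2 * H - 1 = p at *
  rw [hH2]
  have cf := continuousOn_weight (c := -α - 1) (s := s) ht
  have cg := continuousOn_weight (c := -α) (s := s) ht
  obtain ⟨ifA, -, -⟩ := triangle_swap hst hp cf cg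
  obtain ⟨igC, ifB, swap⟩ := triangle_swap hst hp cg cf
  have mem : ∀ u ∈ Set.uIcc s t, s ≤ u ∧ u ≤ t := fun u hu => by
    rwa [Set.uIcc_of_le hst] at hu
  have d1 := integral_congr (μ := volume) fun u hu =>
    split_diagonal (α := α) hp (mem u hu).1 (mem u hu).2 ht
  have ifE : IntervalIntegrable (fun u => (T - u) ^ (-α - 1) * (t - u) ^ (p + 1)) volume s t :=
    integrable_left (by linarith) hst cf
  have d2 := integral_congr (μ := volume) fun u hu =>
    inner_identity (α := α) hp (mem u hu).2 ht
  rw [d1, intervalIntegral.integral_sub ifA ifB, swap]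
  rw [intervalIntegral.integral_const_mul, intervalIntegral.integral_sub ifA igC,
    intervalIntegral.integral_sub (ifA.const_mul _) (ifE.const_mul _),
    intervalIntegral.integral_const_mul, intervalIntegral.integral_const_mul] at d2
  have fin : (∫ v in s..t, (T - v) ^ (-α) * (t - v) ^ p)
      = (∫ u in s..t, (T - u) ^ (-α - 1) * (t - u) ^ (p + 1))
        + (T - t) * ∫ u in s..t, (T - u) ^ (-α - 1) * (t - u) ^ p := by
    rw [← intervalIntegral.integral_const_mul,
      ← intervalIntegral.integral_add ifE ((integrable_left hp hst cf).const_mul _),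
      integral_of_le hst, integral_of_le hst, integral_Ioc_eq_integral_Ioo,
      integral_Ioc_eq_integral_Ioo]
    refine setIntegral_congr_fun measurableSet_Ioo fun u hu => ?_
    rw [weight_mul (α := α) (hu.2.trans ht), Real.rpow_add_one (sub_pos.2 hu.2).ne']
    ring
  have ht1 : (T - t) ^ (1 - α) = (T - t) ^ (-α) * (T - t) := by
    rw [← Real.rpow_add_one (sub_pos.2 ht).ne']
    ring_nf
  rw [d2, fin, ht1]
  ring
end
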